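/- arXiv:2402.02011 — 2 statements merged into one kernel-verified Lean document; each statement's English description precedes it below -/
import Mathlib

section
/- (Theorem 1, first identity) Let m ≥ 3 and k ≥ 1, and let f: ℝ^m × ℝ^m → Cl_m be smooth with f(x,·) ∈ H_k for each fixed x. Then D_k f = −R_k² P_k^+ f + (2/(m+2k−4)) T_k^* R_k P_k^+ f − (2/(m+2k−4)) T_k Q_k P_k^− f − ((m+2k)/(m+2k−4)) Q_k² P_k^− f, where all projections P_k^± act in the variable u and all operators D_x act in the variable x. -/
open scoped BigOperators

/-- The defining Clifford relations `e i * e j + e j * e i = -2 δ_{ij}` for the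
generators of the real Clifford algebra `Cl_m`. -/
def CliffordRel {m : ℕ} {Cl : Type*} [Ring Cl] [Algebra ℝ Cl] (e : Fin m → Cl) : Prop :=
  ∀ i j : Fin m, e i * e j + e j * e i = algebraMap ℝ Cl (if i = j then -2 else 0)

/-- The embedding of `ℝ^m` into the Clifford algebra, `x ↦ ∑ j, x j • e j`. -/
def emb {m : ℕ} {Cl : Type*} [Ring Cl] [Algebra ℝ Cl] (e : Fin m → Cl)
    (x : Fin m → ℝ) : Cl :=
  ∑ j, x j • e j

/-- The partial derivative `∂f/∂x_j`. -/
noncomputable def pd {m : ℕ} {E : Type*} [NormedAddCommGroup E] [NormedSpace ℝ E]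
    (j : Fin m) (f : (Fin m → ℝ) → E) : (Fin m → ℝ) → E :=
  fun x => fderiv ℝ f x (Pi.single j 1)

/-- The Laplacian `Δ f = ∑ j, ∂²f/∂x_j²`. -/
noncomputable def lap {m : ℕ} {E : Type*} [NormedAddCommGroup E] [NormedSpace ℝ E]
    (f : (Fin m → ℝ) → E) : (Fin m → ℝ) → E :=
  fun x => ∑ j, pd j (pd j f) x

/-- The Dirac operator `D f = ∑ j, e j * ∂f/∂x_j` (left Clifford multiplication). -/
noncomputable def dirac {m : ℕ} {Cl : Type*} [NormedRing Cl] [NormedAlgebra ℝ Cl]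
    (e : Fin m → Cl) (f : (Fin m → ℝ) → Cl) : (Fin m → ℝ) → Cl :=
  fun x => ∑ j, e j * pd j f x

/-- `f : ℝ^m → E` is a (module-valued) polynomial homogeneous of degree `k`:
it lies in the real span of the monomial functions `x ↦ (∏ i, x i ^ α i) • c`
with total degree `∑ i, α i = k`. -/
def IsHomPoly {m : ℕ} {E : Type*} [AddCommGroup E] [Module ℝ E] (k : ℕ)
    (f : (Fin m → ℝ) → E) : Prop :=
  f ∈ Submodule.span ℝ {g : (Fin m → ℝ) → E |
    ∃ (α : Fin m → ℕ) (c : E), (∑ i, α i) = k ∧ g = fun x => (∏ i, x i ^ α i) • c}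

/-- Partial derivative `∂/∂x_j` of a function of two variables `(x, u)`. -/
noncomputable def pdx {m : ℕ} {E : Type*} [NormedAddCommGroup E] [NormedSpace ℝ E]
    (j : Fin m) (f : (Fin m → ℝ) → (Fin m → ℝ) → E) :
    (Fin m → ℝ) → (Fin m → ℝ) → E :=
  fun x u => fderiv ℝ (fun y => f y u) x (Pi.single j 1)

/-- Partial derivative `∂/∂u_j` of a function of two variables `(x, u)`. -/
noncomputable def pdu {m : ℕ} {E : Type*} [NormedAddCommGroup E] [NormedSpace ℝ E]
    (j : Fin m) (f : (Fin m → ℝ) → (Fin m → ℝ) → E) :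
    (Fin m → ℝ) → (Fin m → ℝ) → E :=
  fun x u => fderiv ℝ (fun v => f x v) u (Pi.single j 1)

/-- The Laplacian `Δ_x` in the variable `x`. -/
noncomputable def lapx {m : ℕ} {E : Type*} [NormedAddCommGroup E] [NormedSpace ℝ E]
    (f : (Fin m → ℝ) → (Fin m → ℝ) → E) : (Fin m → ℝ) → (Fin m → ℝ) → E :=
  fun x u => ∑ j, pdx j (pdx j f) x u

/-- The mixed operator `⟨∇_u, ∇_x⟩ = ∑ j, ∂_{u_j} ∂_{x_j}`. -/
noncomputable def mixDer {m : ℕ} {E : Type*} [NormedAddCommGroup E] [NormedSpace ℝ E]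
    (f : (Fin m → ℝ) → (Fin m → ℝ) → E) : (Fin m → ℝ) → (Fin m → ℝ) → E :=
  fun x u => ∑ j, pdu j (pdx j f) x u

/-- The Dirac operator `D_x = ∑ j, e j ∂_{x_j}` acting in the variable `x`. -/
noncomputable def diracx {m : ℕ} {Cl : Type*} [NormedRing Cl] [NormedAlgebra ℝ Cl]
    (e : Fin m → Cl) (f : (Fin m → ℝ) → (Fin m → ℝ) → Cl) :
    (Fin m → ℝ) → (Fin m → ℝ) → Cl :=
  fun x u => ∑ j, e j * pdx j f x u

/-- The Dirac operator `D_u = ∑ j, e j ∂_{u_j}` acting in the variable `u`. -/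
noncomputable def diracu {m : ℕ} {Cl : Type*} [NormedRing Cl] [NormedAlgebra ℝ Cl]
    (e : Fin m → Cl) (f : (Fin m → ℝ) → (Fin m → ℝ) → Cl) :
    (Fin m → ℝ) → (Fin m → ℝ) → Cl :=
  fun x u => ∑ j, e j * pdu j f x u

/-- The bosonic Laplacian (higher spin Laplace operator)
`D_k = Δ_x − 4⟨u,∇_x⟩⟨∇_u,∇_x⟩/(m+2k−2) + 4|u|²⟨∇_u,∇_x⟩²/((m+2k−2)(m+2k−4))`. -/
noncomputable def bosonic {m : ℕ} (k : ℕ) {E : Type*} [NormedAddCommGroup E]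
    [NormedSpace ℝ E] (f : (Fin m → ℝ) → (Fin m → ℝ) → E) :
    (Fin m → ℝ) → (Fin m → ℝ) → E :=
  fun x u =>
    lapx f x u
      - (4 / ((m : ℝ) + 2 * k - 2)) • ∑ s, u s • pdx s (mixDer f) x u
      + (4 / (((m : ℝ) + 2 * k - 2) * ((m : ℝ) + 2 * k - 4))) •
          ((∑ i, u i ^ 2) • mixDer (mixDer f) x u)

/-- The projection `P_k^+ = I + u D_u/(m+2k−2)` acting in the variable `u`
(`u` acts by left Clifford multiplication). -/
noncomputable def PpU {m : ℕ} {Cl : Type*} [NormedRing Cl] [NormedAlgebra ℝ Cl]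
    (e : Fin m → Cl) (k : ℕ) (f : (Fin m → ℝ) → (Fin m → ℝ) → Cl) :
    (Fin m → ℝ) → (Fin m → ℝ) → Cl :=
  fun x u => f x u + ((m : ℝ) + 2 * k - 2)⁻¹ • (emb e u * diracu e f x u)

/-- The projection `P_k^- = −u D_u/(m+2k−2)` acting in the variable `u`. -/
noncomputable def PmU {m : ℕ} {Cl : Type*} [NormedRing Cl] [NormedAlgebra ℝ Cl]
    (e : Fin m → Cl) (k : ℕ) (f : (Fin m → ℝ) → (Fin m → ℝ) → Cl) :
    (Fin m → ℝ) → (Fin m → ℝ) → Cl :=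
  fun x u => -(((m : ℝ) + 2 * k - 2)⁻¹ • (emb e u * diracu e f x u))

/-- `P_k^+ D_x`: this is the Rarita–Schwinger operator `R_k` on `C^∞(ℝ^m, M_k)` and the
twistor operator `T_k` on `C^∞(ℝ^m, uM_{k-1})`. -/
noncomputable def PpDx {m : ℕ} {Cl : Type*} [NormedRing Cl] [NormedAlgebra ℝ Cl]
    (e : Fin m → Cl) (k : ℕ) (f : (Fin m → ℝ) → (Fin m → ℝ) → Cl) :
    (Fin m → ℝ) → (Fin m → ℝ) → Cl :=
  PpU e k (diracx e f)

/-- `P_k^- D_x`: this is the dual twistor operator `T_k^*` on `C^∞(ℝ^m, M_k)` and the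
remaining operator `Q_k` on `C^∞(ℝ^m, uM_{k-1})`. -/
noncomputable def PmDx {m : ℕ} {Cl : Type*} [NormedRing Cl] [NormedAlgebra ℝ Cl]
    (e : Fin m → Cl) (k : ℕ) (f : (Fin m → ℝ) → (Fin m → ℝ) → Cl) :
    (Fin m → ℝ) → (Fin m → ℝ) → Cl :=
  PmU e k (diracx e f)

/-!
The operators `u`, `D_u` and `D_x` generate an algebra in which their anticommutators are
`-(2⟨u,∇_u⟩ + m)`, `-2⟨u,∇_x⟩` and `-2⟨∇_u,∇_x⟩`, while `D_x² = -Δ_x` and `u² = -|u|²`; the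
identity is a computation in this algebra. By the Fischer decomposition it suffices to treat
`f = g` and `f = u q` with `g ∈ M_k` and `q ∈ M_{k-1}`. For monogenic `g`, moving `D_u` to the right
gives `R_k g = D_x g - (2/(m+2k-2)) u ⟨∇_u,∇_x⟩ g`, and hence `R_k²` and `T_k^* R_k`. On multiples
of `u` one has `Q_k (u q) = -((m+2k-4)/(m+2k-2)) u R_{k-1} q`, so that `Q_k²` and `T_k Q_k` follow
from the same formulas in degree `k - 1`.
-/

/-- The algebra generated by the operators `u` (`vec`), `D_u` (`diracU`) and `D_x` (`diracX`) on a
space of Clifford-valued functions of `(x, u)`, presented by its relations; the even elements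
`⟨u,∇_u⟩` (`euler`), `⟨u,∇_x⟩` (`sym`) and `⟨∇_u,∇_x⟩` (`mix`) arise as anticommutators. The
dimension `dim` enters only as a scalar. -/
structure DiracSystem (K V : Type*) [Field K] [AddCommGroup V] [Module K V] where
  dim : K
  vec : Module.End K V
  diracU : Module.End K V
  diracX : Module.End K V
  euler : Module.End K V
  sym : Module.End K V
  mix : Module.End K V
  diracU_vec : ∀ v, diracU (vec v) = -((2 : K) • euler v + dim • v) - vec (diracU v)
  diracX_vec : ∀ v, diracX (vec v) = -((2 : K) • sym v) - vec (diracX v)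
  diracU_diracX : ∀ v, diracU (diracX v) = -((2 : K) • mix v) - diracX (diracU v)
  mix_vec : ∀ v, mix (vec v) = vec (mix v) + diracX v
  mix_diracU : ∀ v, mix (diracU v) = diracU (mix v)
  mix_diracX : ∀ v, mix (diracX v) = diracX (mix v)
  sym_vec : ∀ v, sym (vec v) = vec (sym v)
  sym_diracX : ∀ v, sym (diracX v) = diracX (sym v)
  euler_vec : ∀ v, euler (vec v) = vec (euler v) + vec v
  euler_diracU : ∀ v, euler (diracU v) = diracU (euler v) - diracU v
  euler_diracX : ∀ v, euler (diracX v) = diracX (euler v)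
  euler_mix : ∀ v, euler (mix v) = mix (euler v) - mix v

namespace DiracSystem

variable {K V : Type*} [Field K] [AddCommGroup V] [Module K V] (D : DiracSystem K V) {k : K}
  {f g q : V}

/-- The number `m + 2k − 2` attached to the degree `k`, by which the projections are normalised. -/
def weight (k : K) : K := D.dim + 2 * k - 2

lemma weight_sub_one (k : K) : D.weight (k - 1) = D.weight k - 2 := by
  simp only [weight]
  ring

/-- The projection `P_k^+ = I + u D_u/(m+2k−2)`. -/
def projPlus (k : K) : Module.End K V := 1 + (D.weight k)⁻¹ • (D.vec * D.diracU)

/-- The projection `P_k^− = −u D_u/(m+2k−2)`. -/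
def projMinus (k : K) : Module.End K V := -((D.weight k)⁻¹ • (D.vec * D.diracU))

/-- `P_k^+ D_x`, that is `R_k` on `M_k` and `T_k` on `u M_{k-1}`. -/
def plusDirac (k : K) : Module.End K V := D.projPlus k * D.diracX

/-- `P_k^− D_x`, that is `T_k^*` on `M_k` and `Q_k` on `u M_{k-1}`. -/
def minusDirac (k : K) : Module.End K V := D.projMinus k * D.diracX

/-- The bosonic Laplacian `D_k`, where `Δ_x` and `|u|²` are encoded as `−D_x²` and `−u²`. -/
def bosonicLaplacian (k : K) : Module.End K V :=
  -(D.diracX * D.diracX) - (4 / D.weight k) • (D.sym * D.mix)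
    - (4 / (D.weight k * (D.weight k - 2))) • (D.vec * D.vec * (D.mix * D.mix))

/-- The space `M_k` of monogenic elements of degree `k`: the kernel of `D_u` in the
`k`-eigenspace of the Euler operator. -/
def monogenic (k : K) : Submodule K V := LinearMap.ker D.diracU ⊓ D.euler.eigenspace k

variable {D}

lemma mem_monogenic : g ∈ D.monogenic k ↔ D.diracU g = 0 ∧ D.euler g = k • g := by
  simp [monogenic]

lemma diracU_vec_of_mem_monogenic (hq : q ∈ D.monogenic (k - 1)) :
    D.diracU (D.vec q) = -(D.weight k • q) := by
  obtain ⟨hA, hE⟩ := mem_monogenic.1 hq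
  rw [D.diracU_vec, hA, hE, map_zero, weight]
  module

lemma mix_mem_monogenic (hg : g ∈ D.monogenic k) : D.mix g ∈ D.monogenic (k - 1) := by
  obtain ⟨hA, hE⟩ := mem_monogenic.1 hg
  refine mem_monogenic.2 ⟨?_, ?_⟩
  · rw [← D.mix_diracU, hA, map_zero]
  · rw [D.euler_mix, hE, map_smul]
    module

/-! ### The Fischer decomposition -/

lemma projPlus_add_projMinus_apply (k : K) (f : V) : D.projPlus k f + D.projMinus k f = f := by
  simp [projPlus, projMinus]

lemma projMinus_apply (k : K) (f : V) :
    D.projMinus k f = D.vec (-(D.weight k)⁻¹ • D.diracU f) := by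
  simp [projMinus]

lemma diracU_mem_monogenic (hE : D.euler f = k • f) (hA : D.diracU (D.diracU f) = 0) :
    D.diracU f ∈ D.monogenic (k - 1) := by
  refine mem_monogenic.2 ⟨hA, ?_⟩
  rw [D.euler_diracU, hE, map_smul]
  module

lemma projPlus_mem_monogenic (hk : D.weight k ≠ 0) (hE : D.euler f = k • f)
    (hA : D.diracU (D.diracU f) = 0) : D.projPlus k f ∈ D.monogenic k := by
  have hq := diracU_mem_monogenic hE hA
  simp only [projPlus, LinearMap.add_apply, LinearMap.smul_apply, Module.End.one_apply,
    Module.End.mul_apply]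
  refine mem_monogenic.2 ⟨?_, ?_⟩
  · rw [map_add, map_smul, diracU_vec_of_mem_monogenic hq, smul_neg, inv_smul_smul₀ hk,
      add_neg_cancel]
  · rw [map_add, map_smul, D.euler_vec, (mem_monogenic.1 hq).2, hE, map_smul]
    module

/-! ### The bosonic Laplacian on monogenic elements -/

lemma plusDirac_apply (k : K) (f : V) :
    D.plusDirac k f = D.diracX f - D.minusDirac k f :=
  eq_sub_of_add_eq (projPlus_add_projMinus_apply k (D.diracX f))

lemma minusDirac_apply_of_mem_monogenic (hg : g ∈ D.monogenic k) :
    D.minusDirac k g = (2 / D.weight k) • D.vec (D.mix g) := by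
  simp only [minusDirac, Module.End.mul_apply, projMinus_apply, D.diracU_diracX,
    (mem_monogenic.1 hg).1, map_zero, map_sub, map_smul, map_neg]
  module

lemma plusDirac_apply_of_mem_monogenic (hg : g ∈ D.monogenic k) :
    D.plusDirac k g = D.diracX g - (2 / D.weight k) • D.vec (D.mix g) := by
  rw [plusDirac_apply, minusDirac_apply_of_mem_monogenic hg]

lemma plusDirac_mem_monogenic (hk : D.weight k ≠ 0) (hg : g ∈ D.monogenic k) :
    D.plusDirac k g ∈ D.monogenic k := by
  have ht := mix_mem_monogenic hg
  obtain ⟨hA, hE⟩ := mem_monogenic.1 hg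
  rw [plusDirac_apply_of_mem_monogenic hg]
  refine mem_monogenic.2 ⟨?_, ?_⟩
  · rw [map_sub, map_smul, D.diracU_diracX, hA, diracU_vec_of_mem_monogenic ht, map_zero]
    match_scalars
    field_simp
    ring
  · rw [map_sub, map_smul, D.euler_diracX, hE, D.euler_vec, (mem_monogenic.1 ht).2, map_smul,
      map_smul]
    module

lemma mix_plusDirac (hg : g ∈ D.monogenic k) :
    D.mix (D.plusDirac k g) = (1 - 2 / D.weight k) • D.diracX (D.mix g)
      - (2 / D.weight k) • D.vec (D.mix (D.mix g)) := by
  rw [plusDirac_apply_of_mem_monogenic hg, map_sub, map_smul, D.mix_diracX, D.mix_vec]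
  module

lemma diracX_plusDirac (hg : g ∈ D.monogenic k) :
    D.diracX (D.plusDirac k g) = D.diracX (D.diracX g)
      + (2 / D.weight k) • D.vec (D.diracX (D.mix g))
      + (4 / D.weight k) • D.sym (D.mix g) := by
  rw [plusDirac_apply_of_mem_monogenic hg, map_sub, map_smul, D.diracX_vec]
  module

lemma minusDirac_plusDirac (hk : D.weight k ≠ 0) (hg : g ∈ D.monogenic k) :
    D.minusDirac k (D.plusDirac k g) =
      (2 / D.weight k * (1 - 2 / D.weight k)) • D.vec (D.diracX (D.mix g))
        - (4 / D.weight k ^ 2) • D.vec (D.vec (D.mix (D.mix g))) := by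
  rw [minusDirac_apply_of_mem_monogenic (plusDirac_mem_monogenic hk hg), mix_plusDirac hg,
    map_sub, map_smul, map_smul]
  module

lemma plusDirac_plusDirac (hk : D.weight k ≠ 0) (hg : g ∈ D.monogenic k) :
    D.plusDirac k (D.plusDirac k g) = D.diracX (D.diracX g)
      + (4 / D.weight k) • D.sym (D.mix g)
      + (4 / D.weight k ^ 2) • D.vec (D.diracX (D.mix g))
      + (4 / D.weight k ^ 2) • D.vec (D.vec (D.mix (D.mix g))) := by
  rw [plusDirac_apply, minusDirac_plusDirac hk hg, diracX_plusDirac hg]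
  module

theorem bosonicLaplacian_of_mem_monogenic (hk : D.weight k ≠ 0) (hk' : D.weight k - 2 ≠ 0)
    (hg : g ∈ D.monogenic k) :
    D.bosonicLaplacian k g = -D.plusDirac k (D.plusDirac k g)
      + (2 / (D.weight k - 2)) • D.minusDirac k (D.plusDirac k g) := by
  rw [plusDirac_plusDirac hk hg, minusDirac_plusDirac hk hg]
  simp only [bosonicLaplacian, LinearMap.sub_apply, LinearMap.neg_apply, LinearMap.smul_apply,
    Module.End.mul_apply]
  match_scalars <;> field_simp <;> ring

/-! ### The bosonic Laplacian on multiples of the vector variable -/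

lemma minusDirac_vec (hk' : D.weight k - 2 ≠ 0) (hq : q ∈ D.monogenic (k - 1)) :
    D.minusDirac k (D.vec q) =
      -((D.weight k - 2) / D.weight k) • D.vec (D.plusDirac (k - 1) q) := by
  have hAXU : D.diracU (D.diracX (D.vec q)) =
      (D.weight k - 2) • D.diracX q - (2 : K) • D.vec (D.mix q) := by
    rw [D.diracU_diracX, D.mix_vec, diracU_vec_of_mem_monogenic hq, map_neg, map_smul]
    module
  rw [minusDirac, Module.End.mul_apply, projMinus_apply, hAXU,
    plusDirac_apply_of_mem_monogenic hq, weight_sub_one]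
  simp only [map_smul, map_sub]
  match_scalars <;> field_simp

theorem bosonicLaplacian_vec (hk : D.weight k ≠ 0) (hk' : D.weight k - 2 ≠ 0)
    (hq : q ∈ D.monogenic (k - 1)) :
    D.bosonicLaplacian k (D.vec q) =
      -(2 / (D.weight k - 2)) • D.plusDirac k (D.minusDirac k (D.vec q))
        - ((D.weight k + 2) / (D.weight k - 2)) •
            D.minusDirac k (D.minusDirac k (D.vec q)) := by
  have hk₁ : D.weight (k - 1) ≠ 0 := by rwa [weight_sub_one]
  have hRq := plusDirac_mem_monogenic hk₁ hq
  rw [plusDirac_apply]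
  simp only [minusDirac_vec hk' hq, minusDirac_vec hk' hRq, map_smul, D.diracX_vec,
    diracX_plusDirac hq, plusDirac_plusDirac hk₁ hq]
  simp only [plusDirac_apply_of_mem_monogenic hq, weight_sub_one, bosonicLaplacian,
    LinearMap.sub_apply, LinearMap.neg_apply, LinearMap.smul_apply, Module.End.mul_apply,
    D.diracX_vec, D.mix_vec, D.mix_diracX, D.sym_vec, D.sym_diracX, map_add, map_sub, map_neg,
    map_smul]
  match_scalars <;> field_simp <;> ring

theorem bosonicLaplacian_eq (hk : D.weight k ≠ 0) (hk' : D.weight k - 2 ≠ 0)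
    (hE : D.euler f = k • f) (hA : D.diracU (D.diracU f) = 0) :
    D.bosonicLaplacian k f =
      -D.plusDirac k (D.plusDirac k (D.projPlus k f))
        + (2 / (D.weight k - 2)) • D.minusDirac k (D.plusDirac k (D.projPlus k f))
        - (2 / (D.weight k - 2)) • D.plusDirac k (D.minusDirac k (D.projMinus k f))
        - ((D.weight k + 2) / (D.weight k - 2)) •
            D.minusDirac k (D.minusDirac k (D.projMinus k f)) := by
  have hq : -(D.weight k)⁻¹ • D.diracU f ∈ D.monogenic (k - 1) :=
    Submodule.smul_mem _ _ (diracU_mem_monogenic hE hA)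
  conv_lhs => rw [← projPlus_add_projMinus_apply (D := D) k f, map_add]
  rw [bosonicLaplacian_of_mem_monogenic hk hk' (projPlus_mem_monogenic hk hE hA),
    projMinus_apply, bosonicLaplacian_vec hk hk' hq]
  module

end DiracSystem

/-! ### Contractions with Clifford generators -/

section DotProduct

variable {ι R : Type*} [Fintype ι] [Ring R] {c : R} {p q : ι → R}

lemma commute_dotProduct_left (hp : ∀ i, Commute (p i) c) (hq : ∀ i, Commute (q i) c) :
    Commute (p ⬝ᵥ q) c :=
  Commute.sum_left _ _ _ fun i _ => (hp i).mul_left (hq i)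

lemma commute_dotProduct_right (hp : ∀ i, Commute c (p i)) (hq : ∀ i, Commute c (q i)) :
    Commute c (p ⬝ᵥ q) :=
  Commute.sum_right _ _ _ fun i _ => (hp i).mul_right (hq i)

lemma lie_dotProduct (c : R) (p q : ι → R) :
    ⁅c, p ⬝ᵥ q⁆ = (fun i => ⁅c, p i⁆) ⬝ᵥ q + p ⬝ᵥ fun i => ⁅c, q i⁆ := by
  simp only [dotProduct, Ring.lie_def, Finset.mul_sum, Finset.sum_mul, ← Finset.sum_sub_distrib,
    ← Finset.sum_add_distrib]
  refine Finset.sum_congr rfl fun i _ => ?_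
  noncomm_ring

lemma dotProduct_lie (p q : ι → R) (c : R) :
    ⁅p ⬝ᵥ q, c⁆ = (fun i => ⁅p i, c⁆) ⬝ᵥ q + p ⬝ᵥ fun i => ⁅q i, c⁆ := by
  simp only [dotProduct, Ring.lie_def, Finset.mul_sum, Finset.sum_mul, ← Finset.sum_sub_distrib,
    ← Finset.sum_add_distrib]
  refine Finset.sum_congr rfl fun i _ => ?_
  noncomm_ring

end DotProduct

namespace CliffordRel

variable {m : ℕ} {R : Type*} [Ring R] [Algebra ℝ R] {γ p q : Fin m → R}

lemma mul_self (h : CliffordRel γ) (i : Fin m) : γ i * γ i = -1 := by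
  have htwo : (2 : ℝ) • (γ i * γ i) = (2 : ℝ) • (-1 : R) := by
    rw [two_smul, h i i, if_pos rfl, Algebra.algebraMap_eq_smul_one]
    module
  exact smul_right_injective _ two_ne_zero htwo

lemma dotProduct_mul_add_mul_dotProduct (h : CliffordRel γ) (hp : ∀ i j, Commute (γ i) (p j))
    (hq : ∀ i j, Commute (γ i) (q j)) {c : ℝ}
    (hpq : ∀ i j, ⁅p i, q j⁆ = algebraMap ℝ R (if i = j then c else 0)) :
    (γ ⬝ᵥ p) * (γ ⬝ᵥ q) + (γ ⬝ᵥ q) * (γ ⬝ᵥ p) =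
      -((2 : ℝ) • (q ⬝ᵥ p) + (m * c) • (1 : R)) := by
  have hterm : ∀ i j, γ i * p i * (γ j * q j) + γ j * q j * (γ i * p i) =
      if i = j then -((2 : ℝ) • (q i * p i) + c • 1) else 0 := fun i j => by
    calc γ i * p i * (γ j * q j) + γ j * q j * (γ i * p i)
        = γ i * γ j * (p i * q j) + γ j * γ i * (q j * p i) := by
          rw [(hp j i).symm.mul_mul_mul_comm, (hq i j).symm.mul_mul_mul_comm]
      _ = (γ i * γ j + γ j * γ i) * (q j * p i) + γ i * γ j * ⁅p i, q j⁆ := by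
          rw [Ring.lie_def]
          noncomm_ring
      _ = _ := by
          rw [h i j, hpq i j]
          split_ifs with hij
          · subst hij
            rw [h.mul_self, Algebra.algebraMap_eq_smul_one, Algebra.algebraMap_eq_smul_one,
              smul_mul_assoc, one_mul, neg_one_mul]
            module
          · simp
  simp only [dotProduct, Finset.sum_mul_sum]
  rw [Finset.sum_comm (f := fun i j => γ i * q i * (γ j * p j)), ← Finset.sum_add_distrib]
  simp only [← Finset.sum_add_distrib, hterm, Finset.sum_ite_eq, Finset.mem_univ, if_true,
    Finset.sum_neg_distrib, Finset.smul_sum]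
  simp [Finset.sum_add_distrib, ← Nat.cast_smul_eq_nsmul ℝ, mul_smul]

lemma dotProduct_mul_add_mul_dotProduct_of_commute (h : CliffordRel γ)
    (hp : ∀ i j, Commute (γ i) (p j)) (hq : ∀ i j, Commute (γ i) (q j))
    (hpq : ∀ i j, Commute (p i) (q j)) :
    (γ ⬝ᵥ p) * (γ ⬝ᵥ q) + (γ ⬝ᵥ q) * (γ ⬝ᵥ p) = -((2 : ℝ) • (q ⬝ᵥ p)) := by
  simpa using h.dotProduct_mul_add_mul_dotProduct hp hq (c := 0)
    fun i j => by simp [(hpq i j).lie_eq]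

lemma dotProduct_mul_self (h : CliffordRel γ) (hp : ∀ i j, Commute (γ i) (p j))
    (hpp : ∀ i j, Commute (p i) (p j)) : (γ ⬝ᵥ p) * (γ ⬝ᵥ p) = -(p ⬝ᵥ p) := by
  have htwo := h.dotProduct_mul_add_mul_dotProduct_of_commute hp hp hpp
  rw [← two_smul ℝ, ← smul_neg] at htwo
  exact smul_right_injective _ two_ne_zero htwo

end CliffordRel

/-- Clifford generators `γ` together with operators `dx = ∂_x`, `du = ∂_u` and multiplications
`u` by the coordinates of `u`, all commuting except for the Clifford relations among the `γ i` and
the canonical relations between `du` and `u`. -/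
structure IsWeylClifford {m : ℕ} {R : Type*} [Ring R] [Algebra ℝ R] (γ dx du u : Fin m → R) :
    Prop where
  clifford : CliffordRel γ
  gamma_dx : ∀ i j, Commute (γ i) (dx j)
  gamma_du : ∀ i j, Commute (γ i) (du j)
  gamma_u : ∀ i j, Commute (γ i) (u j)
  dx_dx : ∀ i j, Commute (dx i) (dx j)
  du_du : ∀ i j, Commute (du i) (du j)
  u_u : ∀ i j, Commute (u i) (u j)
  dx_du : ∀ i j, Commute (dx i) (du j)
  dx_u : ∀ i j, Commute (dx i) (u j)
  lie_du_u : ∀ i j, ⁅du i, u j⁆ = algebraMap ℝ R (if i = j then 1 else 0)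

namespace IsWeylClifford

section Ring

variable {m : ℕ} {R : Type*} [Ring R] [Algebra ℝ R] {γ dx du u : Fin m → R}

lemma lie_du_euler (h : IsWeylClifford γ dx du u) (i : Fin m) : ⁅du i, u ⬝ᵥ du⁆ = du i := by
  rw [lie_dotProduct]
  simp [dotProduct, h.lie_du_u, (h.du_du i _).lie_eq, apply_ite (algebraMap ℝ R)]

lemma lie_euler_u (h : IsWeylClifford γ dx du u) (i : Fin m) : ⁅u ⬝ᵥ du, u i⁆ = u i := by
  rw [dotProduct_lie]
  simp [dotProduct, h.lie_du_u, (h.u_u _ i).lie_eq, apply_ite (algebraMap ℝ R)]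

lemma lie_mix_u (h : IsWeylClifford γ dx du u) (i : Fin m) : ⁅du ⬝ᵥ dx, u i⁆ = dx i := by
  rw [dotProduct_lie]
  simp [dotProduct, h.lie_du_u, (h.dx_u _ i).lie_eq, apply_ite (algebraMap ℝ R)]

lemma commute_dx_euler (h : IsWeylClifford γ dx du u) (i : Fin m) : Commute (dx i) (u ⬝ᵥ du) :=
  commute_dotProduct_right (h.dx_u i) (h.dx_du i)

lemma commute_gamma_euler (h : IsWeylClifford γ dx du u) (i : Fin m) :
    Commute (γ i) (u ⬝ᵥ du) :=
  commute_dotProduct_right (h.gamma_u i) (h.gamma_du i)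

lemma commute_mix_gamma (h : IsWeylClifford γ dx du u) (i : Fin m) :
    Commute (du ⬝ᵥ dx) (γ i) :=
  commute_dotProduct_left (fun j => (h.gamma_du i j).symm) fun j => (h.gamma_dx i j).symm

lemma commute_sym_gamma (h : IsWeylClifford γ dx du u) (i : Fin m) :
    Commute (u ⬝ᵥ dx) (γ i) :=
  commute_dotProduct_left (fun j => (h.gamma_u i j).symm) fun j => (h.gamma_dx i j).symm

lemma lie_mix_vec (h : IsWeylClifford γ dx du u) : ⁅du ⬝ᵥ dx, γ ⬝ᵥ u⁆ = γ ⬝ᵥ dx := by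
  rw [lie_dotProduct]
  simp [(h.commute_mix_gamma _).lie_eq, h.lie_mix_u]

lemma lie_euler_vec (h : IsWeylClifford γ dx du u) : ⁅u ⬝ᵥ du, γ ⬝ᵥ u⁆ = γ ⬝ᵥ u := by
  rw [lie_dotProduct]
  simp [(h.commute_gamma_euler _).symm.lie_eq, h.lie_euler_u]

lemma lie_diracU_euler (h : IsWeylClifford γ dx du u) : ⁅γ ⬝ᵥ du, u ⬝ᵥ du⁆ = γ ⬝ᵥ du := by
  rw [dotProduct_lie]
  simp [(h.commute_gamma_euler _).lie_eq, h.lie_du_euler]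

lemma lie_mix_euler (h : IsWeylClifford γ dx du u) : ⁅du ⬝ᵥ dx, u ⬝ᵥ du⁆ = du ⬝ᵥ dx := by
  rw [dotProduct_lie]
  simp [(h.commute_dx_euler _).lie_eq, h.lie_du_euler]

lemma commute_mix_diracU (h : IsWeylClifford γ dx du u) : Commute (du ⬝ᵥ dx) (γ ⬝ᵥ du) :=
  commute_dotProduct_right h.commute_mix_gamma fun i =>
    commute_dotProduct_left (fun j => h.du_du j i) fun j => h.dx_du j i

lemma commute_mix_diracX (h : IsWeylClifford γ dx du u) : Commute (du ⬝ᵥ dx) (γ ⬝ᵥ dx) :=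
  commute_dotProduct_right h.commute_mix_gamma fun i =>
    commute_dotProduct_left (fun j => (h.dx_du i j).symm) fun j => h.dx_dx j i

lemma commute_sym_vec (h : IsWeylClifford γ dx du u) : Commute (u ⬝ᵥ dx) (γ ⬝ᵥ u) :=
  commute_dotProduct_right h.commute_sym_gamma fun i =>
    commute_dotProduct_left (fun j => h.u_u j i) fun j => h.dx_u j i

lemma commute_sym_diracX (h : IsWeylClifford γ dx du u) : Commute (u ⬝ᵥ dx) (γ ⬝ᵥ dx) :=
  commute_dotProduct_right h.commute_sym_gamma fun i =>
    commute_dotProduct_left (fun j => (h.dx_u i j).symm) fun j => h.dx_dx j i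

lemma commute_diracX_euler (h : IsWeylClifford γ dx du u) : Commute (γ ⬝ᵥ dx) (u ⬝ᵥ du) :=
  commute_dotProduct_left h.commute_gamma_euler h.commute_dx_euler

end Ring

section DiracSystem

variable {m : ℕ} {V : Type*} [AddCommGroup V] [Module ℝ V] {γ dx du u : Fin m → Module.End ℝ V}

/-- The Dirac system of a Weyl–Clifford family of operators, with `u`, `D_u`, `D_x` the
contractions of the Clifford generators with `u`, `du`, `dx`. -/
noncomputable def diracSystem (h : IsWeylClifford γ dx du u) : DiracSystem ℝ V where
  dim := m
  vec := γ ⬝ᵥ u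
  diracU := γ ⬝ᵥ du
  diracX := γ ⬝ᵥ dx
  euler := u ⬝ᵥ du
  sym := u ⬝ᵥ dx
  mix := du ⬝ᵥ dx
  diracU_vec v := by
    have hanti := h.clifford.dotProduct_mul_add_mul_dotProduct h.gamma_du h.gamma_u h.lie_du_u
    rw [mul_one] at hanti
    exact eq_sub_of_add_eq (LinearMap.congr_fun hanti v)
  diracX_vec v := eq_sub_of_add_eq <| LinearMap.congr_fun
    (h.clifford.dotProduct_mul_add_mul_dotProduct_of_commute h.gamma_dx h.gamma_u h.dx_u) v
  diracU_diracX v := by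
    have hanti := h.clifford.dotProduct_mul_add_mul_dotProduct_of_commute h.gamma_dx h.gamma_du
      h.dx_du
    exact eq_sub_of_add_eq' (LinearMap.congr_fun hanti v)
  mix_vec := LinearMap.congr_fun (sub_eq_iff_eq_add'.1 h.lie_mix_vec)
  mix_diracU := LinearMap.congr_fun h.commute_mix_diracU.eq
  mix_diracX := LinearMap.congr_fun h.commute_mix_diracX.eq
  sym_vec := LinearMap.congr_fun h.commute_sym_vec.eq
  sym_diracX := LinearMap.congr_fun h.commute_sym_diracX.eq
  euler_vec := LinearMap.congr_fun (sub_eq_iff_eq_add'.1 h.lie_euler_vec)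
  euler_diracU := LinearMap.congr_fun <|
    eq_sub_of_add_eq' (sub_eq_iff_eq_add.1 h.lie_diracU_euler).symm
  euler_diracX := LinearMap.congr_fun h.commute_diracX_euler.symm.eq
  euler_mix := LinearMap.congr_fun <|
    eq_sub_of_add_eq' (sub_eq_iff_eq_add.1 h.lie_mix_euler).symm

lemma diracSystem_weight (h : IsWeylClifford γ dx du u) (k : ℝ) :
    h.diracSystem.weight k = m + 2 * k - 2 := rfl

lemma diracSystem_diracU_mul_diracU (h : IsWeylClifford γ dx du u) :
    h.diracSystem.diracU * h.diracSystem.diracU = -(du ⬝ᵥ du) :=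
  h.clifford.dotProduct_mul_self h.gamma_du h.du_du

lemma diracSystem_bosonicLaplacian (h : IsWeylClifford γ dx du u) (k : ℝ) :
    h.diracSystem.bosonicLaplacian k = dx ⬝ᵥ dx
      - (4 / (m + 2 * k - 2)) • ((u ⬝ᵥ dx) * (du ⬝ᵥ dx))
      + (4 / ((m + 2 * k - 2) * (m + 2 * k - 4))) •
          ((u ⬝ᵥ u) * ((du ⬝ᵥ dx) * (du ⬝ᵥ dx))) := by
  have hweight : (m : ℝ) + 2 * k - 2 - 2 = m + 2 * k - 4 := by ring
  have hdx : h.diracSystem.diracX * h.diracSystem.diracX = -(dx ⬝ᵥ dx) :=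
    h.clifford.dotProduct_mul_self h.gamma_dx h.dx_dx
  have hu : h.diracSystem.vec * h.diracSystem.vec = -(u ⬝ᵥ u) :=
    h.clifford.dotProduct_mul_self h.gamma_u h.u_u
  rw [DiracSystem.bosonicLaplacian, diracSystem_weight, hweight, hdx, hu, neg_neg, neg_mul,
    smul_neg, sub_neg_eq_add]
  rfl

end DiracSystem

end IsWeylClifford

/-! ### Operators on smooth maps -/

section SmoothMaps

open scoped ContDiff

variable {P E : Type*} [NormedAddCommGroup P] [NormedSpace ℝ P] [NormedAddCommGroup E]
  [NormedSpace ℝ E]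

lemma fderiv_fderiv_apply {g : P → E} (hg : ContDiff ℝ ∞ g) (p v w : P) :
    fderiv ℝ (fun q => fderiv ℝ g q v) p w = fderiv ℝ (fderiv ℝ g) p w v := by
  have hd : DifferentiableAt ℝ (fderiv ℝ g) p :=
    (hg.fderiv_right (m := ∞) (by simp)).differentiable (by simp) p
  rw [fderiv_clm_apply hd (differentiableAt_const v)]
  simp

lemma fderiv_fderiv_apply_comm {g : P → E} (hg : ContDiff ℝ ∞ g) (p v w : P) :
    fderiv ℝ (fun q => fderiv ℝ g q v) p w = fderiv ℝ (fun q => fderiv ℝ g q w) p v := by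
  have hsymm : IsSymmSndFDerivAt ℝ g p :=
    (contDiff_infty.1 hg 2).contDiffAt.isSymmSndFDerivAt (by simp)
  rw [fderiv_fderiv_apply hg, fderiv_fderiv_apply hg, hsymm.eq]

variable (P E) in
/-- The space of smooth maps from `P` to `E`, on which the differential operators act as
endomorphisms. -/
def smoothMaps : Submodule ℝ (P → E) where
  carrier := {f | ContDiff ℝ ∞ f}
  zero_mem' := by
    rw [Set.mem_ofPred_eq]
    exact contDiff_const
  add_mem' hf hg := by
    rw [Set.mem_ofPred_eq] at hf hg ⊢
    exact hf.add hg
  smul_mem' c _ hf := by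
    rw [Set.mem_ofPred_eq] at hf ⊢
    exact hf.const_smul c

lemma mem_smoothMaps {f : P → E} : f ∈ smoothMaps P E ↔ ContDiff ℝ ∞ f := Iff.rfl

namespace smoothMaps

lemma contDiff (f : smoothMaps P E) : ContDiff ℝ ∞ (f : P → E) := mem_smoothMaps.1 f.2

lemma hasFDerivAt (f : smoothMaps P E) (p : P) :
    HasFDerivAt (f : P → E) (fderiv ℝ (f : P → E) p) p :=
  ((contDiff f).differentiable (by simp) p).hasFDerivAt

/-- The derivative in the constant direction `w`. -/
noncomputable def dirDeriv (w : P) : Module.End ℝ (smoothMaps P E) where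
  toFun f := ⟨fun p => fderiv ℝ (f : P → E) p w,
    mem_smoothMaps.2 (((contDiff f).fderiv_right (by simp)).clm_apply contDiff_const)⟩
  map_add' f g := by
    ext p
    exact congrArg (· w) ((hasFDerivAt f p).add (hasFDerivAt g p)).fderiv
  map_smul' c f := by
    ext p
    exact congrArg (· w) ((hasFDerivAt f p).const_smul c).fderiv

/-- Multiplication by the linear form `l`. -/
noncomputable def mulLinear (l : P →L[ℝ] ℝ) : Module.End ℝ (smoothMaps P E) where
  toFun f := ⟨fun p => l p • (f : P → E) p, mem_smoothMaps.2 (l.contDiff.smul (contDiff f))⟩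
  map_add' f g := by
    ext p
    simp
  map_smul' c f := by
    ext p
    simp [smul_comm c]

@[simp] lemma dirDeriv_apply (w : P) (f : smoothMaps P E) (p : P) :
    (dirDeriv w f : P → E) p = fderiv ℝ (f : P → E) p w := rfl

@[simp] lemma mulLinear_apply (l : P →L[ℝ] ℝ) (f : smoothMaps P E) (p : P) :
    (mulLinear l f : P → E) p = l p • (f : P → E) p := rfl

lemma commute_dirDeriv (v w : P) :
    Commute (dirDeriv v : Module.End ℝ (smoothMaps P E)) (dirDeriv w) := by
  ext f p
  exact fderiv_fderiv_apply_comm (contDiff f) p w v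

lemma commute_mulLinear (l l' : P →L[ℝ] ℝ) :
    Commute (mulLinear l : Module.End ℝ (smoothMaps P E)) (mulLinear l') := by
  ext f p
  exact smul_comm (l p) (l' p) _

lemma lie_dirDeriv_mulLinear (w : P) (l : P →L[ℝ] ℝ) :
    ⁅(dirDeriv w : Module.End ℝ (smoothMaps P E)), mulLinear l⁆ =
      algebraMap ℝ (Module.End ℝ (smoothMaps P E)) (l w) := by
  ext f p
  have hmul : fderiv ℝ (mulLinear l f : P → E) p w =
      l p • fderiv ℝ (f : P → E) p w + l w • (f : P → E) p := by
    rw [show (mulLinear l f : P → E) = fun p => l p • (f : P → E) p from rfl,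
      (l.hasFDerivAt.fun_smul (hasFDerivAt f p)).fderiv]
    simp
  simp [Ring.lie_def, hmul]

lemma dotProduct_apply {ι : Type*} [Fintype ι] (S T : ι → Module.End ℝ (smoothMaps P E))
    (f : smoothMaps P E) (p : P) :
    ((S ⬝ᵥ T) f : P → E) p = ∑ i, (S i (T i f) : P → E) p := by
  simp [dotProduct]

variable {Cl : Type*} [NormedRing Cl] [NormedAlgebra ℝ Cl]

/-- Left multiplication by constants. -/
noncomputable def leftMul : Cl →ₐ[ℝ] Module.End ℝ (smoothMaps P Cl) where
  toFun c :=
    { toFun := fun f =>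
        ⟨fun p => c * (f : P → Cl) p, mem_smoothMaps.2 (contDiff_const.mul (contDiff f))⟩
      map_add' := fun f g => by
        ext p
        simp [mul_add]
      map_smul' := fun r f => by
        ext p
        simp }
  map_one' := by
    ext f p
    simp
  map_mul' c d := by
    ext f p
    simp [mul_assoc]
  map_zero' := by
    ext f p
    simp
  map_add' c d := by
    ext f p
    simp [add_mul]
  commutes' r := by
    ext f p
    simp [Algebra.algebraMap_eq_smul_one]

lemma commute_leftMul_dirDeriv (c : Cl) (w : P) :
    Commute (leftMul c : Module.End ℝ (smoothMaps P Cl)) (dirDeriv w) := by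
  ext f p
  exact congrArg (· w) ((hasFDerivAt f p).const_mul c).fderiv.symm

lemma commute_leftMul_mulLinear (c : Cl) (l : P →L[ℝ] ℝ) :
    Commute (leftMul c : Module.End ℝ (smoothMaps P Cl)) (mulLinear l) := by
  ext f p
  exact mul_smul_comm (l p) c _

end smoothMaps

end SmoothMaps

/-! ### Functions of two vector variables -/

section TwoVariables

open smoothMaps Function

variable {m : ℕ} {E : Type*} [NormedAddCommGroup E] [NormedSpace ℝ E]

variable (m E) in
/-- The smooth functions of the two vector variables `(x, u)`, in uncurried form. -/
noncomputable abbrev SmoothTwoVar : Submodule ℝ ((Fin m → ℝ) × (Fin m → ℝ) → E) :=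
  smoothMaps ((Fin m → ℝ) × (Fin m → ℝ)) E

variable (m E) in
/-- The operators `∂/∂x_j`. -/
noncomputable def derivX (j : Fin m) : Module.End ℝ (SmoothTwoVar m E) :=
  dirDeriv (Pi.single j 1, 0)

variable (m E) in
/-- The operators `∂/∂u_j`. -/
noncomputable def derivU (j : Fin m) : Module.End ℝ (SmoothTwoVar m E) :=
  dirDeriv (0, Pi.single j 1)

variable (m E) in
/-- The multiplications by the coordinates `u_j`. -/
noncomputable def coordU (j : Fin m) : Module.End ℝ (SmoothTwoVar m E) :=
  mulLinear (.comp (.proj j) (.snd ℝ _ _))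

lemma coordU_apply (j : Fin m) (F : SmoothTwoVar m E) (x u : Fin m → ℝ) :
    (coordU m E j F).1 (x, u) = u j • F.1 (x, u) := rfl

lemma pdx_curry (j : Fin m) (F : SmoothTwoVar m E) :
    pdx j (curry F.1) = curry (derivX m E j F).1 := by
  funext x u
  have hpartial : HasFDerivAt (fun y => F.1 (y, u)) _ x :=
    (smoothMaps.hasFDerivAt F (x, u)).comp (f := fun y => (y, u)) x
      (hasFDerivAt_prodMk_left (𝕜 := ℝ) x u)
  simp [pdx, derivX, hpartial.fderiv]

lemma pdu_curry (j : Fin m) (F : SmoothTwoVar m E) :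
    pdu j (curry F.1) = curry (derivU m E j F).1 := by
  funext x u
  have hpartial : HasFDerivAt (fun v => F.1 (x, v)) _ u :=
    (smoothMaps.hasFDerivAt F (x, u)).comp (f := fun v => (x, v)) u
      (hasFDerivAt_prodMk_right (𝕜 := ℝ) x u)
  simp [pdu, derivU, hpartial.fderiv]

lemma lapx_curry (F : SmoothTwoVar m E) :
    lapx (curry F.1) = curry ((derivX m E ⬝ᵥ derivX m E) F).1 := by
  funext x u
  simp [lapx, pdx_curry, dotProduct_apply]

lemma mixDer_curry (F : SmoothTwoVar m E) :
    mixDer (curry F.1) = curry ((derivU m E ⬝ᵥ derivX m E) F).1 := by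
  funext x u
  simp [mixDer, pdx_curry, pdu_curry, dotProduct_apply]

lemma isWeylClifford_smoothTwoVar {Cl : Type*} [NormedRing Cl] [NormedAlgebra ℝ Cl]
    {e : Fin m → Cl} (he : CliffordRel e) :
    IsWeylClifford (fun i => leftMul (e i)) (derivX m Cl) (derivU m Cl) (coordU m Cl) where
  clifford i j := by
    rw [← map_mul, ← map_mul, ← map_add, he i j, AlgHom.commutes]
  gamma_dx i _ := commute_leftMul_dirDeriv (e i) _
  gamma_du i _ := commute_leftMul_dirDeriv (e i) _
  gamma_u i _ := commute_leftMul_mulLinear (e i) _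
  dx_dx _ _ := commute_dirDeriv _ _
  du_du _ _ := commute_dirDeriv _ _
  u_u _ _ := commute_mulLinear _ _
  dx_du _ _ := commute_dirDeriv _ _
  dx_u i j := commute_iff_lie_eq.2 <| (lie_dirDeriv_mulLinear _ _).trans (by simp)
  lie_du_u i j := (lie_dirDeriv_mulLinear _ _).trans (by simp [Pi.single_apply, eq_comm])

end TwoVariables

/-! ### Homogeneous polynomials -/

lemma IsHomPoly.map_smul {m : ℕ} {E : Type*} [AddCommGroup E] [Module ℝ E] {k : ℕ}
    {g : (Fin m → ℝ) → E} (hg : IsHomPoly k g) (c : ℝ) (u : Fin m → ℝ) :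
    g (c • u) = c ^ k • g u := by
  induction hg using Submodule.span_induction with
  | mem g hg =>
    obtain ⟨α, d, rfl, rfl⟩ := hg
    simp [mul_pow, Finset.prod_mul_distrib, Finset.prod_pow_eq_pow_sum, mul_smul]
  | zero => simp
  | add g h _ _ ihg ihh => simp [ihg, ihh]
  | smul r g _ ih => simp [ih, smul_comm r]

lemma fderiv_apply_self_of_homogeneous {V E : Type*} [NormedAddCommGroup V] [NormedSpace ℝ V]
    [NormedAddCommGroup E] [NormedSpace ℝ E] {k : ℕ} {g : V → E} {u : V}
    (hg : ∀ c : ℝ, g (c • u) = c ^ k • g u) (hd : DifferentiableAt ℝ g u) :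
    fderiv ℝ g u u = (k : ℝ) • g u := by
  have hline : HasDerivAt (fun c : ℝ => c • u) u 1 := by
    simpa using (hasDerivAt_id (1 : ℝ)).smul_const u
  have hcomp : HasDerivAt (fun c : ℝ => g (c • u)) (fderiv ℝ g u u) 1 :=
    HasFDerivAt.comp_hasDerivAt (l := g) (f := fun c : ℝ => c • u) 1
      (by simpa using hd.hasFDerivAt) hline
  have hpow : HasDerivAt (fun c : ℝ => g (c • u)) ((k : ℝ) • g u) 1 := by
    simpa [hg] using (hasDerivAt_pow k (1 : ℝ)).smul_const (g u)
  exact hcomp.unique hpow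

/-! ### The Rarita–Schwinger type operators -/

section Transfer

open smoothMaps Function

variable {m : ℕ} {Cl : Type*} [NormedRing Cl] [NormedAlgebra ℝ Cl] {e : Fin m → Cl}

/-- The Dirac system acting on the smooth Clifford-valued functions of `(x, u)`. -/
noncomputable def smoothDiracSystem (he : CliffordRel e) : DiracSystem ℝ (SmoothTwoVar m Cl) :=
  (isWeylClifford_smoothTwoVar he).diracSystem

lemma smoothDiracSystem_weight (he : CliffordRel e) (k : ℝ) :
    (smoothDiracSystem he).weight k = m + 2 * k - 2 := rfl

namespace smoothDiracSystem

lemma diracU_diracU_eq_zero (he : CliffordRel e) {F : SmoothTwoVar m Cl}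
    (hF : ∀ x, lap (curry F.1 x) = 0) :
    (smoothDiracSystem he).diracU ((smoothDiracSystem he).diracU F) = 0 := by
  have hlap : (derivU m Cl ⬝ᵥ derivU m Cl) F = 0 := by
    ext ⟨x, u⟩
    calc ((derivU m Cl ⬝ᵥ derivU m Cl) F).1 (x, u)
        = ∑ j, pdu j (pdu j (curry F.1)) x u := by
          simp only [dotProduct_apply, pdu_curry, curry_apply]
      _ = 0 := congrFun (hF x) u
  exact (LinearMap.congr_fun (isWeylClifford_smoothTwoVar he).diracSystem_diracU_mul_diracU F).trans
    (neg_eq_zero.2 hlap)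

lemma euler_eq_smul (he : CliffordRel e) {k : ℕ} {F : SmoothTwoVar m Cl}
    (hF : ∀ x, IsHomPoly k (curry F.1 x)) : (smoothDiracSystem he).euler F = (k : ℝ) • F := by
  ext ⟨x, u⟩
  have hd : DifferentiableAt ℝ (curry F.1 x) u :=
    ((smoothMaps.contDiff F).comp (contDiff_const.prodMk contDiff_id)).differentiable (by simp) u
  calc ((coordU m Cl ⬝ᵥ derivU m Cl) F).1 (x, u)
      = ∑ j, u j • pdu j (curry F.1) x u := by
        simp only [dotProduct_apply, coordU_apply, pdu_curry, curry_apply]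
    _ = fderiv ℝ (curry F.1 x) u (∑ j, u j • Pi.single j 1) := by
        simp only [map_sum, map_smul, pdu]
    _ = fderiv ℝ (curry F.1 x) u u := by rw [← pi_eq_sum_univ' u]
    _ = (k : ℝ) • F.1 (x, u) :=
        fderiv_apply_self_of_homogeneous (fun c => (hF x).map_smul c u) hd

end smoothDiracSystem

lemma bosonic_curry (he : CliffordRel e) (k : ℕ) (F : SmoothTwoVar m Cl) :
    bosonic k (curry F.1) = curry ((smoothDiracSystem he).bosonicLaplacian k F).1 := by
  rw [smoothDiracSystem, IsWeylClifford.diracSystem_bosonicLaplacian]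
  funext x u
  simp [bosonic, lapx_curry, mixDer_curry, pdx_curry, dotProduct_apply (coordU m Cl),
    coordU_apply, smul_smul, Finset.sum_smul, pow_two]

lemma diracx_curry (he : CliffordRel e) (F : SmoothTwoVar m Cl) :
    diracx e (curry F.1) = curry ((smoothDiracSystem he).diracX F).1 := by
  funext x u
  simp only [diracx, pdx_curry]
  exact (dotProduct_apply (fun i => leftMul (e i)) (derivX m Cl) F (x, u)).symm

lemma diracu_curry (he : CliffordRel e) (F : SmoothTwoVar m Cl) :
    diracu e (curry F.1) = curry ((smoothDiracSystem he).diracU F).1 := by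
  funext x u
  simp only [diracu, pdu_curry]
  exact (dotProduct_apply (fun i => leftMul (e i)) (derivU m Cl) F (x, u)).symm

lemma emb_mul_curry (he : CliffordRel e) (F : SmoothTwoVar m Cl) (x u : Fin m → ℝ) :
    emb e u * curry F.1 x u = curry ((smoothDiracSystem he).vec F).1 x u := by
  rw [emb, Finset.sum_mul]
  simp only [smul_mul_assoc, ← mul_smul_comm]
  exact (dotProduct_apply (fun i => leftMul (e i)) (coordU m Cl) F (x, u)).symm

lemma PpU_curry (he : CliffordRel e) (k : ℕ) (F : SmoothTwoVar m Cl) :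
    PpU e k (curry F.1) = curry ((smoothDiracSystem he).projPlus k F).1 := by
  funext x u
  rw [PpU, diracu_curry he, emb_mul_curry he]
  rfl

lemma PmU_curry (he : CliffordRel e) (k : ℕ) (F : SmoothTwoVar m Cl) :
    PmU e k (curry F.1) = curry ((smoothDiracSystem he).projMinus k F).1 := by
  funext x u
  rw [PmU, diracu_curry he, emb_mul_curry he]
  rfl

lemma PpDx_curry (he : CliffordRel e) (k : ℕ) (F : SmoothTwoVar m Cl) :
    PpDx e k (curry F.1) = curry ((smoothDiracSystem he).plusDirac k F).1 := by
  rw [PpDx, diracx_curry he, PpU_curry he]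
  rfl

lemma PmDx_curry (he : CliffordRel e) (k : ℕ) (F : SmoothTwoVar m Cl) :
    PmDx e k (curry F.1) = curry ((smoothDiracSystem he).minusDirac k F).1 := by
  rw [PmDx, diracx_curry he, PmU_curry he]
  rfl

end Transfer

theorem stmt9_general {m k : ℕ} (h2 : m + 2 * k ≠ 2) (h4 : m + 2 * k ≠ 4) {Cl : Type*}
    [NormedRing Cl] [NormedAlgebra ℝ Cl] (e : Fin m → Cl) (hrel : CliffordRel e)
    (f : (Fin m → ℝ) → (Fin m → ℝ) → Cl)
    (hf : ContDiff ℝ (⊤ : ℕ∞) (fun p : (Fin m → ℝ) × (Fin m → ℝ) => f p.1 p.2))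
    (hfu : ∀ x, IsHomPoly k (f x) ∧ lap (f x) = 0) :
    ∀ x u, bosonic k f x u =
        -(PpDx e k (PpDx e k (PpU e k f)) x u)
          + (2 / ((m : ℝ) + 2 * k - 4)) • PmDx e k (PpDx e k (PpU e k f)) x u
          - (2 / ((m : ℝ) + 2 * k - 4)) • PpDx e k (PmDx e k (PmU e k f)) x u
          - (((m : ℝ) + 2 * k) / ((m : ℝ) + 2 * k - 4)) •
              PmDx e k (PmDx e k (PmU e k f)) x u := by
  intro x u
  obtain ⟨F, rfl⟩ : ∃ F : SmoothTwoVar m Cl, f = Function.curry F.1 :=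
    ⟨⟨Function.uncurry f, mem_smoothMaps.2 hf⟩, rfl⟩
  have hweight : (smoothDiracSystem hrel).weight (k : ℝ) ≠ 0 := by
    rw [smoothDiracSystem_weight, sub_ne_zero]
    exact_mod_cast h2
  have hweight_sub : (smoothDiracSystem hrel).weight (k : ℝ) - 2 = m + 2 * k - 4 := by
    rw [smoothDiracSystem_weight]
    ring
  have hweight_add : (smoothDiracSystem hrel).weight (k : ℝ) + 2 = m + 2 * k := by
    rw [smoothDiracSystem_weight, sub_add_cancel]
  have hweight' : (smoothDiracSystem hrel).weight (k : ℝ) - 2 ≠ 0 := by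
    rw [hweight_sub, sub_ne_zero]
    exact_mod_cast h4
  have hdecomp := (smoothDiracSystem hrel).bosonicLaplacian_eq hweight hweight'
    (smoothDiracSystem.euler_eq_smul hrel fun x => (hfu x).1)
    (smoothDiracSystem.diracU_diracU_eq_zero hrel fun x => (hfu x).2)
  rw [hweight_sub, hweight_add] at hdecomp
  rw [bosonic_curry hrel, hdecomp]
  simp only [PpU_curry hrel, PmU_curry hrel, PpDx_curry hrel, PmDx_curry hrel]
  rfl

/-- **Theorem 1, first identity.** For `m ≥ 3`, `k ≥ 1` and smooth
`f : ℝ^m × ℝ^m → Cl_m` with `f(x,·) ∈ H_k` for each `x`,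
`D_k f = −R_k² P_k^+ f + (2/(m+2k−4)) T_k^* R_k P_k^+ f − (2/(m+2k−4)) T_k Q_k P_k^- f
− ((m+2k)/(m+2k−4)) Q_k² P_k^- f`, where `P_k^±` act in `u` and `D_x` acts in `x`. -/
theorem stmt9 {m k : ℕ} (hm : 3 ≤ m) (hk : 1 ≤ k) {Cl : Type*} [NormedRing Cl]
    [NormedAlgebra ℝ Cl] (e : Fin m → Cl) (hrel : CliffordRel e)
    (f : (Fin m → ℝ) → (Fin m → ℝ) → Cl)
    (hf : ContDiff ℝ (⊤ : ℕ∞) (fun p : (Fin m → ℝ) × (Fin m → ℝ) => f p.1 p.2))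
    (hfu : ∀ x, IsHomPoly k (f x) ∧ lap (f x) = 0) :
    ∀ x u, bosonic k f x u =
        -(PpDx e k (PpDx e k (PpU e k f)) x u)
          + (2 / ((m : ℝ) + 2 * k - 4)) • PmDx e k (PpDx e k (PpU e k f)) x u
          - (2 / ((m : ℝ) + 2 * k - 4)) • PpDx e k (PmDx e k (PmU e k f)) x u
          - (((m : ℝ) + 2 * k) / ((m : ℝ) + 2 * k - 4)) •
              PmDx e k (PmDx e k (PmU e k f)) x u := by
  exact stmt9_general (by omega) (by omega) e hrel f hf hfu
end

section
/- Let m ≥ 3 and k ≥ 1, and let f: ℝ^m × ℝ^m → Cl_m be smooth with f(x,·) ∈ H_k for each fixed x. Then the compositions P_k^+ ∘ T_k^* ∘ P_k^+, P_k^+ ∘ Q_k ∘ P_k^−, P_k^− ∘ R_k ∘ P_k^+, and P_k^− ∘ T_k ∘ P_k^− all annihilate f; equivalently, for each fixed x, (R_k P_k^+ f)(x,·) and (T_k P_k^− f)(x,·) belong to M_k, while (T_k^* P_k^+ f)(x,·) and (Q_k P_k^− f)(x,·) belong to uM_{k−1}. -/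
open scoped BigOperators

/-!
For fixed `x` the function `f(x,·)` lies in the space `H_k`, and Lagrange interpolation gives fixed
scalar polynomials `p_i` and points `w_i` with `f(x,u) = ∑ i, p_i(u) f(x,w_i)`. Hence `∂_{x_j}`
acts on the coefficients `f(x,w_i)` only: it commutes with `∂_{u_i}` and preserves `H_k`-valued
functions, so `D_x P_k^± f` again takes values in `H_k`.

It remains to see that `P_k^+` maps `H_k` to `M_k` and kills `uM_{k-1}`, and that `P_k^-` maps `H_k`
to `uM_{k-1}` and kills `M_k`. Since `D_u² = -Δ_u`, `D_u` maps `H_k` to `M_{k-1}`. For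
`q ∈ M_{k-1}` the Clifford relations and Euler's identity give `D_u(uq) = -(m+2k-2) q`, which is
exactly the normalization of the projections.
-/

section LinearAlgebra

open Module

theorem exists_basis_coord_eq_of_separating {K V X : Type*} [Field K] [AddCommGroup V] [Module K V]
    [FiniteDimensional K V] (φ : X → Dual K V) (hφ : ∀ v ≠ 0, ∃ x, φ x v ≠ 0) :
    ∃ (b : Basis (Fin (finrank K V)) K V) (x : Fin (finrank K V) → X),
      ∀ i, b.coord i = φ (x i) := by
  have hspan : ⊤ ≤ Submodule.span K (Set.range φ) :=
    (Submodule.span_eq_top_of_ne_zero fun v hv => by simpa using hφ v hv).ge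
  let d₀ := Basis.ofSpan hspan
  let d := d₀.reindex (d₀.indexEquiv (finBasis K V).dualBasis)
  have hd (i : Fin (finrank K V)) : ∃ x, φ x = d i :=
    Basis.ofSpan_subset hspan (by simp [d, d₀])
  choose x hx using hd
  refine ⟨d.dualBasis.map (evalEquiv K V).symm, x, fun i => ?_⟩
  rw [hx]
  refine (d.dualBasis.map (evalEquiv K V).symm).ext fun j => ?_
  rw [Basis.coord_apply, Basis.repr_self, Basis.map_apply, apply_evalEquiv_symm_apply,
    Basis.dualBasis_apply_self, Finsupp.single_apply]
  simp only [eq_comm]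

end LinearAlgebra

section Calculus

variable {m : ℕ} {E F : Type*} [NormedAddCommGroup E] [NormedSpace ℝ E]
  [NormedAddCommGroup F] [NormedSpace ℝ F]

theorem pd_zero (j : Fin m) : pd j (0 : (Fin m → ℝ) → E) = 0 := by
  ext u
  simp [pd]

theorem pd_add {g h : (Fin m → ℝ) → E} {u : Fin m → ℝ} (hg : DifferentiableAt ℝ g u)
    (hh : DifferentiableAt ℝ h u) (j : Fin m) : pd j (g + h) u = pd j g u + pd j h u := by
  simp [pd, fderiv_add hg hh]

theorem pd_sum {ι : Type*} [Fintype ι] {g : ι → (Fin m → ℝ) → E} {u : Fin m → ℝ}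
    (hg : ∀ i, DifferentiableAt ℝ (g i) u) (j : Fin m) :
    pd j (∑ i, g i) u = ∑ i, pd j (g i) u := by
  simp [pd, fderiv_sum fun i _ => hg i]

theorem pd_clm_comp (L : E →L[ℝ] F) {g : (Fin m → ℝ) → E} {u : Fin m → ℝ}
    (hg : DifferentiableAt ℝ g u) (j : Fin m) : pd j (L ∘ g) u = L (pd j g u) := by
  rw [pd, (L.hasFDerivAt.comp u hg.hasFDerivAt).fderiv, ContinuousLinearMap.comp_apply, pd]

theorem pd_const_smul (a : ℝ) {g : (Fin m → ℝ) → E} {u : Fin m → ℝ}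
    (hg : DifferentiableAt ℝ g u) (j : Fin m) : pd j (a • g) u = a • pd j g u :=
  pd_clm_comp (a • ContinuousLinearMap.id ℝ E) hg j

theorem contDiff_pd {n : WithTop ℕ∞} {g : (Fin m → ℝ) → E} (hg : ContDiff ℝ (n + 1) g)
    (j : Fin m) : ContDiff ℝ n (pd j g) :=
  (hg.fderiv_right le_rfl).clm_apply contDiff_const

theorem pd_comm {g : (Fin m → ℝ) → E} (hg : ContDiff ℝ 2 g) (i j : Fin m) :
    pd i (pd j g) = pd j (pd i g) := by
  have pd_pd_eq (a b : Fin m) (u : Fin m → ℝ) :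
      pd a (pd b g) u = fderiv ℝ (fderiv ℝ g) u (Pi.single a 1) (Pi.single b 1) := by
    have hd : DifferentiableAt ℝ (fderiv ℝ g) u :=
      (hg.fderiv_right (m := 1) le_rfl).differentiable one_ne_zero u
    unfold pd
    simp [fderiv_clm_apply hd (differentiableAt_const _)]
  ext u
  rw [pd_pd_eq, pd_pd_eq]
  exact hg.contDiffAt.isSymmSndFDerivAt (by simp) _ _

theorem lap_zero : lap (0 : (Fin m → ℝ) → E) = 0 := by
  ext u
  simp [lap, pd_zero]

theorem lap_add {g h : (Fin m → ℝ) → E} (hg : ContDiff ℝ 2 g) (hh : ContDiff ℝ 2 h) :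
    lap (g + h) = lap g + lap h := by
  have pd_add_fun (j : Fin m) : pd j (g + h) = pd j g + pd j h := funext fun u =>
    pd_add (hg.differentiable two_ne_zero u) (hh.differentiable two_ne_zero u) j
  ext u
  have hpd {f : (Fin m → ℝ) → E} (hf : ContDiff ℝ 2 f) (j : Fin m) :
      DifferentiableAt ℝ (pd j f) u :=
    (contDiff_pd (n := 1) hf j).differentiable one_ne_zero u
  simp only [lap, pd_add_fun, pd_add (hpd hg _) (hpd hh _), Finset.sum_add_distrib, Pi.add_apply]

theorem lap_clm_comp (L : E →L[ℝ] F) {g : (Fin m → ℝ) → E} (hg : ContDiff ℝ 2 g) :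
    lap (L ∘ g) = L ∘ lap g := by
  have pd_comp (j : Fin m) : pd j (L ∘ g) = L ∘ pd j g :=
    funext fun u => pd_clm_comp L (hg.differentiable two_ne_zero u) j
  ext u
  have hpd (j : Fin m) : DifferentiableAt ℝ (pd j g) u :=
    (contDiff_pd (n := 1) hg j).differentiable one_ne_zero u
  simp only [lap, pd_comp, pd_clm_comp L (hpd _), Function.comp_apply, map_sum]

theorem lap_const_smul (a : ℝ) {g : (Fin m → ℝ) → E} (hg : ContDiff ℝ 2 g) :
    lap (a • g) = a • lap g :=
  lap_clm_comp (a • ContinuousLinearMap.id ℝ E) hg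

end Calculus

section Polynomials

open MvPolynomial

variable {m k : ℕ} {E : Type*} [NormedAddCommGroup E] [NormedSpace ℝ E]

/-- The polynomial map `u ↦ p(u) c` with a scalar polynomial `p` and a vector coefficient `c`;
homogeneous `E`-valued polynomials are finite sums of these. -/
noncomputable def polySMul (p : MvPolynomial (Fin m) ℝ) (c : E) : (Fin m → ℝ) → E :=
  fun u => eval u p • c

theorem contDiff_polySMul {n : WithTop ℕ∞} (p : MvPolynomial (Fin m) ℝ) (c : E) :
    ContDiff ℝ n (polySMul p c) :=
  contDiff_iff_contDiffAt.mpr fun u =>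
    (AnalyticOnNhd.eval_mvPolynomial p u (Set.mem_univ u)).contDiffAt.smul contDiffAt_const

theorem differentiable_polySMul (p : MvPolynomial (Fin m) ℝ) (c : E) :
    Differentiable ℝ (polySMul p c) :=
  (contDiff_polySMul (n := 1) p c).differentiable one_ne_zero

theorem hasFDerivAt_eval (p : MvPolynomial (Fin m) ℝ) (u : Fin m → ℝ) :
    HasFDerivAt (fun v => eval v p)
      (∑ i, eval u (pderiv i p) • ContinuousLinearMap.proj (R := ℝ) (φ := fun _ => ℝ) i) u := by
  induction p using MvPolynomial.induction_on with
  | C a => simpa using hasFDerivAt_const a u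
  | add p q hp hq =>
    simp only [map_add, add_smul, Finset.sum_add_distrib]
    exact hp.add hq
  | mul_X p j hp =>
    simp only [map_mul, eval_X]
    refine (hp.mul (hasFDerivAt_apply j u)).congr_fderiv ?_
    ext v
    simp [pderiv_X, Pi.single_apply, mul_add, Finset.sum_add_distrib, Finset.mul_sum,
      mul_left_comm, mul_comm, apply_ite]

theorem pd_polySMul (p : MvPolynomial (Fin m) ℝ) (c : E) (j : Fin m) :
    pd j (polySMul p c) = polySMul (pderiv j p) c := by
  ext u
  have h : HasFDerivAt (polySMul p c) _ u := (hasFDerivAt_eval p u).smul_const c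
  simp [pd, h.fderiv, polySMul, Pi.single_apply]

theorem pd_sum_polySMul {ι : Type*} [Fintype ι] (p : ι → MvPolynomial (Fin m) ℝ) (c : ι → E)
    (j : Fin m) : pd j (∑ i, polySMul (p i) (c i)) = ∑ i, polySMul (pderiv j (p i)) (c i) := by
  ext u
  rw [pd_sum fun i => differentiable_polySMul (p i) (c i) u]
  simp only [pd_polySMul, Finset.sum_apply]

theorem isHomPoly_polySMul {p : MvPolynomial (Fin m) ℝ} (hp : p.IsHomogeneous k) (c : E) :
    IsHomPoly k (polySMul p c) := by
  have hsum : polySMul p c = ∑ α ∈ p.support, p.coeff α • fun u => (∏ i, u i ^ α i) • c := by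
    ext u
    simp [polySMul, eval_eq', Finset.sum_smul, mul_smul]
  rw [hsum]
  refine Submodule.sum_mem _ fun α hα =>
    Submodule.smul_mem _ _ (Submodule.subset_span ⟨α, c, ?_, rfl⟩)
  simpa [Finsupp.weight_apply, Finsupp.sum_fintype] using hp (mem_support_iff.mp hα)

theorem exists_lagrange_interpolation (K σ : Type*) [Field K] [Infinite K] [Finite σ] (k : ℕ) :
    ∃ (n : ℕ) (w : Fin n → σ → K) (p : Fin n → MvPolynomial σ K), (∀ i, (p i).IsHomogeneous k) ∧
      ∀ q : MvPolynomial σ K, q.IsHomogeneous k → q = ∑ i, eval (w i) q • p i := by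
  have : FiniteDimensional K (homogeneousSubmodule σ K k) := .of_fg (homogeneousSubmodule_fg σ K k)
  let ev (w : σ → K) : Module.Dual K (homogeneousSubmodule σ K k) :=
    (aeval w).toLinearMap.comp (Submodule.subtype _)
  obtain ⟨b, w, hb⟩ := exists_basis_coord_eq_of_separating ev fun q hq => by
    contrapose! hq
    exact Subtype.ext (MvPolynomial.funext fun v => by simpa [ev, aeval_eq_eval] using hq v)
  refine ⟨_, w, fun i => b i, fun i => (b i).2, fun q hq => ?_⟩
  have hrepr (i) : b.repr ⟨q, hq⟩ i = eval (w i) q := by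
    simpa [ev, aeval_eq_eval] using congrArg (fun L => L ⟨q, hq⟩) (hb i)
  simpa [hrepr] using congrArg Subtype.val (b.sum_repr ⟨q, hq⟩).symm

theorem exists_vector_lagrange_interpolation (m k : ℕ) (E : Type*) [NormedAddCommGroup E]
    [NormedSpace ℝ E] :
    ∃ (n : ℕ) (w : Fin n → Fin m → ℝ) (p : Fin n → MvPolynomial (Fin m) ℝ),
      (∀ i, (p i).IsHomogeneous k) ∧
      ∀ g : (Fin m → ℝ) → E, IsHomPoly k g → g = ∑ i, polySMul (p i) (g (w i)) := by
  obtain ⟨n, w, p, hp, interp⟩ := exists_lagrange_interpolation ℝ (Fin m) k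
  refine ⟨n, w, p, hp, fun g hg => ?_⟩
  induction hg using Submodule.span_induction with
  | mem g hg =>
    obtain ⟨α, c, rfl, rfl⟩ := hg
    let q : MvPolynomial (Fin m) ℝ := monomial (Finsupp.equivFunOnFinite.symm α) 1
    have hq : q.IsHomogeneous (∑ i, α i) :=
      isHomogeneous_monomial 1 (Finsupp.degree_eq_sum _)
    have eval_q (u : Fin m → ℝ) : eval u q = ∏ i, u i ^ α i := by
      simp [q, eval_monomial, Finsupp.prod_fintype]
    ext u
    have h := congrArg (eval u) (interp q hq)
    simp only [map_sum, smul_eval, eval_q] at h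
    simp [polySMul, h, Finset.sum_smul, smul_smul, mul_comm]
  | zero => ext; simp [polySMul]
  | add g h _ _ hg hh =>
    nth_rewrite 1 [hg, hh]
    ext u
    simp [polySMul, Finset.sum_add_distrib]
  | smul a g _ hg =>
    nth_rewrite 1 [hg]
    ext u
    simp [polySMul, Finset.smul_sum, smul_comm a]

theorem IsHomPoly.exists_eq_sum_polySMul {g : (Fin m → ℝ) → E} (hg : IsHomPoly k g) :
    ∃ (n : ℕ) (p : Fin n → MvPolynomial (Fin m) ℝ) (c : Fin n → E),
      (∀ i, (p i).IsHomogeneous k) ∧ g = ∑ i, polySMul (p i) (c i) :=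
  have ⟨_, w, p, hp, interp⟩ := exists_vector_lagrange_interpolation m k E
  ⟨_, p, fun i => g (w i), hp, interp g hg⟩

theorem IsHomPoly.contDiff {n : WithTop ℕ∞} {g : (Fin m → ℝ) → E} (hg : IsHomPoly k g) :
    ContDiff ℝ n g := by
  obtain ⟨_, p, c, -, rfl⟩ := hg.exists_eq_sum_polySMul
  rw [Finset.sum_fn]
  exact ContDiff.sum fun i _ => contDiff_polySMul (p i) (c i)

theorem IsHomPoly.differentiable {g : (Fin m → ℝ) → E} (hg : IsHomPoly k g) :
    Differentiable ℝ g :=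
  (hg.contDiff (n := 1)).differentiable one_ne_zero

protected theorem IsHomPoly.pd {g : (Fin m → ℝ) → E} (hg : IsHomPoly k g) (j : Fin m) :
    IsHomPoly (k - 1) (pd j g) := by
  obtain ⟨_, p, c, hp, rfl⟩ := hg.exists_eq_sum_polySMul
  rw [pd_sum_polySMul]
  exact Submodule.sum_mem _ fun i _ => isHomPoly_polySMul (hp i).pderiv (c i)

theorem IsHomPoly.coord_smul {g : (Fin m → ℝ) → E} (hg : IsHomPoly k g) (j : Fin m) :
    IsHomPoly (k + 1) (fun u => u j • g u) := by
  obtain ⟨_, p, c, hp, rfl⟩ := hg.exists_eq_sum_polySMul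
  have hsum : (fun u : Fin m → ℝ => u j • (∑ i, polySMul (p i) (c i)) u) =
      ∑ i, polySMul (p i * X j) (c i) := by
    ext u
    simp [polySMul, Finset.smul_sum, smul_smul, mul_comm]
  rw [hsum]
  exact Submodule.sum_mem _ fun i _ => isHomPoly_polySMul ((hp i).mul (isHomogeneous_X ℝ j)) (c i)

theorem IsHomPoly.clm_comp {F : Type*} [NormedAddCommGroup F] [NormedSpace ℝ F] (L : E →L[ℝ] F)
    {g : (Fin m → ℝ) → E} (hg : IsHomPoly k g) : IsHomPoly k (L ∘ g) := by
  obtain ⟨_, p, c, hp, rfl⟩ := hg.exists_eq_sum_polySMul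
  have hsum : L ∘ ∑ i, polySMul (p i) (c i) = ∑ i, polySMul (p i) (L (c i)) := by
    ext u
    simp [polySMul]
  rw [hsum]
  exact Submodule.sum_mem _ fun i _ => isHomPoly_polySMul (hp i) (L (c i))

theorem IsHomPoly.sum_coord_smul_pd {g : (Fin m → ℝ) → E} (hg : IsHomPoly k g)
    (u : Fin m → ℝ) : ∑ j, u j • pd j g u = (k : ℝ) • g u := by
  obtain ⟨_, p, c, hp, rfl⟩ := hg.exists_eq_sum_polySMul
  have euler (i) : ∑ j, u j * eval u (pderiv j (p i)) = k * eval u (p i) := by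
    simpa using congrArg (eval u) (hp i).sum_X_mul_pderiv
  simp only [pd_sum_polySMul, Finset.sum_apply, polySMul, Finset.smul_sum, smul_smul]
  rw [Finset.sum_comm]
  simp only [← Finset.sum_smul, euler]

end Polynomials

section Dirac

variable {m k : ℕ} {Cl : Type*} [NormedRing Cl] [NormedAlgebra ℝ Cl] {e : Fin m → Cl}

theorem pd_const_mul (a : Cl) {g : (Fin m → ℝ) → Cl} {u : Fin m → ℝ}
    (hg : DifferentiableAt ℝ g u) (j : Fin m) : pd j (fun v => a * g v) u = a * pd j g u :=
  pd_clm_comp (ContinuousLinearMap.mul ℝ Cl a) hg j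

theorem lap_const_mul (a : Cl) {g : (Fin m → ℝ) → Cl} (hg : ContDiff ℝ 2 g) :
    lap (fun u => a * g u) = fun u => a * lap g u :=
  lap_clm_comp (ContinuousLinearMap.mul ℝ Cl a) hg

theorem dirac_eq_sum (e : Fin m → Cl) (g : (Fin m → ℝ) → Cl) :
    dirac e g = ∑ j, fun u => e j * pd j g u := by
  ext u
  simp [dirac]

theorem dirac_zero (e : Fin m → Cl) : dirac e 0 = 0 := by
  ext u
  simp [dirac, pd_zero]

theorem dirac_add (e : Fin m → Cl) {g h : (Fin m → ℝ) → Cl} (hg : Differentiable ℝ g)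
    (hh : Differentiable ℝ h) : dirac e (g + h) = dirac e g + dirac e h := by
  ext u
  simp [dirac, pd_add (hg u) (hh u), mul_add, Finset.sum_add_distrib]

theorem dirac_const_smul (e : Fin m → Cl) (a : ℝ) {g : (Fin m → ℝ) → Cl}
    (hg : Differentiable ℝ g) : dirac e (a • g) = a • dirac e g := by
  ext u
  simp [dirac, pd_const_smul a (hg u), Finset.smul_sum]

theorem CliffordRel.mul_self_s11 (hrel : CliffordRel e) (i : Fin m) : e i * e i = -1 := by
  have h : (2 : ℝ) • (e i * e i) = (2 : ℝ) • (-1 : Cl) := by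
    simpa [← two_smul ℝ, Algebra.algebraMap_eq_smul_one] using hrel i i
  exact smul_right_injective Cl two_ne_zero h

theorem CliffordRel.mul_emb_add_emb_mul (hrel : CliffordRel e) (j : Fin m) (u : Fin m → ℝ) :
    e j * emb e u + emb e u * e j = -(2 * u j) • (1 : Cl) := by
  simp only [emb, Finset.mul_sum, Finset.sum_mul, mul_smul_comm, smul_mul_assoc,
    ← Finset.sum_add_distrib, ← smul_add, hrel _ _]
  simp [Algebra.algebraMap_eq_smul_one, smul_smul, ite_smul, mul_comm]

theorem CliffordRel.dirac_dirac (hrel : CliffordRel e) {g : (Fin m → ℝ) → Cl}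
    (hg : ContDiff ℝ 2 g) : dirac e (dirac e g) = -lap g := by
  ext u
  have dirac_dirac_eq : dirac e (dirac e g) u = ∑ i, ∑ j, e i * e j * pd i (pd j g) u := by
    have hpd (j : Fin m) : DifferentiableAt ℝ (pd j g) u :=
      (contDiff_pd (n := 1) hg j).differentiable one_ne_zero u
    rw [dirac_eq_sum e g, dirac]
    simp only [pd_sum fun j => (hpd j).const_mul (e j), pd_const_mul _ (hpd _), Finset.mul_sum,
      mul_assoc]
  have symmetrized : (2 : ℝ) • dirac e (dirac e g) u =
      ∑ i, ∑ j, (e i * e j + e j * e i) * pd i (pd j g) u := by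
    simp only [add_mul, Finset.sum_add_distrib]
    rw [two_smul, dirac_dirac_eq, Finset.sum_comm (f := fun i j => e j * e i * _)]
    simp only [pd_comm hg]
  have anticommuted : (2 : ℝ) • dirac e (dirac e g) u = (2 : ℝ) • (-lap g) u := by
    simp only [symmetrized, hrel _ _]
    simp [lap, apply_ite, Algebra.algebraMap_eq_smul_one, Finset.smul_sum]
  exact smul_right_injective Cl two_ne_zero anticommuted

theorem differentiable_emb (e : Fin m → Cl) : Differentiable ℝ (emb e) := by
  unfold emb
  fun_prop

theorem pd_emb (e : Fin m → Cl) (j : Fin m) (u : Fin m → ℝ) : pd j (emb e) u = e j := by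
  have h : HasFDerivAt (emb e) _ u := HasFDerivAt.fun_sum fun i _ =>
    (ContinuousLinearMap.proj (R := ℝ) (φ := fun _ => ℝ) i).hasFDerivAt.smul_const (e i)
  simp [pd, h.fderiv, Pi.single_apply]

theorem pd_mul {g h : (Fin m → ℝ) → Cl} {u : Fin m → ℝ} (hg : DifferentiableAt ℝ g u)
    (hh : DifferentiableAt ℝ h u) (j : Fin m) :
    pd j (g * h) u = pd j g u * h u + g u * pd j h u := by
  simp [pd, fderiv_mul' hg hh, add_comm]

theorem CliffordRel.dirac_emb_mul (hrel : CliffordRel e) {g : (Fin m → ℝ) → Cl}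
    {u : Fin m → ℝ} (hg : DifferentiableAt ℝ g u) :
    dirac e (emb e * g) u =
      -((m : ℝ) • g u) - emb e u * dirac e g u - (2 : ℝ) • ∑ j, u j • pd j g u := by
  have summand (j : Fin m) : e j * pd j (emb e * g) u =
      -g u - emb e u * (e j * pd j g u) - (2 : ℝ) • (u j • pd j g u) := by
    have swap : e j * emb e u = -(emb e u * e j) - (2 * u j) • (1 : Cl) := by
      rw [eq_sub_of_add_eq (hrel.mul_emb_add_emb_mul j u)]
      module
    rw [pd_mul (differentiable_emb e u) hg, pd_emb, mul_add, ← mul_assoc, hrel.mul_self_s11,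
      ← mul_assoc, swap]
    simp only [sub_mul, neg_mul, one_mul, smul_mul_assoc, mul_smul, mul_assoc]
    abel
  simp only [dirac, summand, Finset.sum_sub_distrib, Finset.mul_sum, Finset.smul_sum]
  simp [Nat.cast_smul_eq_nsmul]

theorem IsHomPoly.const_mul {g : (Fin m → ℝ) → Cl} (hg : IsHomPoly k g) (a : Cl) :
    IsHomPoly k (fun u => a * g u) :=
  hg.clm_comp (ContinuousLinearMap.mul ℝ Cl a)

protected theorem IsHomPoly.dirac {g : (Fin m → ℝ) → Cl} (hg : IsHomPoly k g) (e : Fin m → Cl) :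
    IsHomPoly (k - 1) (dirac e g) := by
  rw [dirac_eq_sum]
  exact Submodule.sum_mem _ fun j _ => (hg.pd j).const_mul (e j)

theorem IsHomPoly.emb_mul {g : (Fin m → ℝ) → Cl} (hg : IsHomPoly k g) (e : Fin m → Cl) :
    IsHomPoly (k + 1) (emb e * g) := by
  have hsum : emb e * g = ∑ j, fun u => u j • (e j * g u) := by
    ext u
    simp [emb, Finset.sum_mul]
  rw [hsum]
  exact Submodule.sum_mem _ fun j _ => (hg.const_mul (e j)).coord_smul j

end Dirac

section HarmonicPolynomials

variable {m k : ℕ} {Cl : Type*} [NormedRing Cl] [NormedAlgebra ℝ Cl] {e : Fin m → Cl}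

/-- The space `H_k` of `E`-valued harmonic polynomials on `ℝ^m` homogeneous of degree `k`. -/
def harmonicPoly (m k : ℕ) (E : Type*) [NormedAddCommGroup E] [NormedSpace ℝ E] :
    Submodule ℝ ((Fin m → ℝ) → E) where
  carrier := {g | IsHomPoly k g ∧ lap g = 0}
  zero_mem' := ⟨Submodule.zero_mem _, lap_zero⟩
  add_mem' := fun {g h} ⟨hg, hg'⟩ ⟨hh, hh'⟩ =>
    ⟨Submodule.add_mem _ hg hh, by rw [lap_add hg.contDiff hh.contDiff, hg', hh', add_zero]⟩
  smul_mem' := fun a g ⟨hg, hg'⟩ =>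
    ⟨Submodule.smul_mem _ a hg, by
      rw [lap_const_smul a hg.contDiff, hg', smul_zero]⟩

/-- The space `M_k` of left monogenic polynomials on `ℝ^m` homogeneous of degree `k`. -/
def monogenicPoly (e : Fin m → Cl) (k : ℕ) : Submodule ℝ ((Fin m → ℝ) → Cl) where
  carrier := {g | IsHomPoly k g ∧ dirac e g = 0}
  zero_mem' := ⟨Submodule.zero_mem _, dirac_zero e⟩
  add_mem' := fun {g h} ⟨hg, hg'⟩ ⟨hh, hh'⟩ =>
    ⟨Submodule.add_mem _ hg hh, by
      rw [dirac_add e hg.differentiable hh.differentiable, hg', hh', add_zero]⟩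
  smul_mem' := fun a g ⟨hg, hg'⟩ =>
    ⟨Submodule.smul_mem _ a hg, by rw [dirac_const_smul e a hg.differentiable, hg', smul_zero]⟩

theorem const_mul_mem_harmonicPoly (a : Cl) {g : (Fin m → ℝ) → Cl}
    (hg : g ∈ harmonicPoly m k Cl) : (fun u => a * g u) ∈ harmonicPoly m k Cl := by
  refine ⟨hg.1.const_mul a, ?_⟩
  ext u
  rw [lap_const_mul a hg.1.contDiff, hg.2]
  simp

theorem monogenicPoly_le_harmonicPoly (hrel : CliffordRel e) :
    monogenicPoly e k ≤ harmonicPoly m k Cl := fun g hg => ⟨hg.1, by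
  rw [← neg_eq_zero, ← hrel.dirac_dirac hg.1.contDiff, hg.2, dirac_zero]⟩

theorem dirac_mem_monogenicPoly (hrel : CliffordRel e) {g : (Fin m → ℝ) → Cl}
    (hg : g ∈ harmonicPoly m (k + 1) Cl) : dirac e g ∈ monogenicPoly e k :=
  ⟨hg.1.dirac e, by rw [hrel.dirac_dirac hg.1.contDiff, hg.2, neg_zero]⟩

theorem dirac_emb_mul_of_mem_monogenicPoly (hrel : CliffordRel e) {q : (Fin m → ℝ) → Cl}
    (hq : q ∈ monogenicPoly e k) : dirac e (emb e * q) = -((m : ℝ) + 2 * k) • q := by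
  ext u
  rw [hrel.dirac_emb_mul (hq.1.differentiable u), hq.2, hq.1.sum_coord_smul_pd]
  simp only [Pi.zero_apply, mul_zero, Pi.smul_apply]
  module

end HarmonicPolynomials

section Families

open MvPolynomial

variable {m k : ℕ} {E : Type*} [NormedAddCommGroup E] [NormedSpace ℝ E]
  {f : (Fin m → ℝ) → (Fin m → ℝ) → E}

theorem pdu_sum_polySMul {ι : Type*} [Fintype ι] (p : ι → MvPolynomial (Fin m) ℝ)
    (c : ι → (Fin m → ℝ) → E) (j : Fin m) :
    pdu j (fun x => ∑ i, polySMul (p i) (c i x)) =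
      fun x => ∑ i, polySMul (pderiv j (p i)) (c i x) :=
  funext fun x => pd_sum_polySMul p (fun i => c i x) j

theorem pdx_sum_polySMul {ι : Type*} [Fintype ι] (p : ι → MvPolynomial (Fin m) ℝ)
    {c : ι → (Fin m → ℝ) → E} (hc : ∀ i, Differentiable ℝ (c i)) (j : Fin m) :
    pdx j (fun x => ∑ i, polySMul (p i) (c i x)) =
      fun x => ∑ i, polySMul (p i) (pd j (c i) x) := by
  ext x u
  have hsum : (fun y => (∑ i, polySMul (p i) (c i y)) u) = ∑ i, eval u (p i) • c i := by
    ext y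
    simp [polySMul]
  calc
    _ = pd j (∑ i, eval u (p i) • c i) x := by rw [pdx, hsum, pd]
    _ = ∑ i, eval u (p i) • pd j (c i) x := by
      rw [pd_sum fun i => (hc i x).const_smul _]
      simp only [pd_const_smul _ (hc _ x)]
    _ = _ := by simp [polySMul]

/-- A family `x ↦ f x` of polynomials, homogeneous of degree `k` in the second variable and
differentiable in the parameter `x` for each fixed value of the second variable. -/
structure DiffHomFamily (k : ℕ) (f : (Fin m → ℝ) → (Fin m → ℝ) → E) : Prop where
  isHomPoly : ∀ x, IsHomPoly k (f x)
  differentiable : ∀ u, Differentiable ℝ fun x => f x u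

namespace DiffHomFamily

/-- The coefficients are differentiable because interpolation expresses them through finitely
many values of `f x`. -/
theorem exists_eq_sum_polySMul (hf : DiffHomFamily k f) :
    ∃ (n : ℕ) (p : Fin n → MvPolynomial (Fin m) ℝ) (c : Fin n → (Fin m → ℝ) → E),
      (∀ i, (p i).IsHomogeneous k) ∧ (∀ i, Differentiable ℝ (c i)) ∧
      f = fun x => ∑ i, polySMul (p i) (c i x) :=
  have ⟨_, w, p, hp, interp⟩ := exists_vector_lagrange_interpolation m k E
  ⟨_, p, fun i x => f x (w i), hp, fun i => hf.differentiable (w i),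
    funext fun x => interp (f x) (hf.isHomPoly x)⟩

protected theorem pdu (hf : DiffHomFamily k f) (j : Fin m) : DiffHomFamily (k - 1) (pdu j f) where
  isHomPoly x := (hf.isHomPoly x).pd j
  differentiable u := by
    obtain ⟨_, p, c, -, hc, rfl⟩ := hf.exists_eq_sum_polySMul
    simp only [pdu_sum_polySMul, Finset.sum_apply, polySMul]
    fun_prop

theorem isHomPoly_pdx (hf : DiffHomFamily k f) (j : Fin m) (x : Fin m → ℝ) :
    IsHomPoly k (pdx j f x) := by
  obtain ⟨_, p, c, hp, hc, rfl⟩ := hf.exists_eq_sum_polySMul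
  rw [pdx_sum_polySMul p hc]
  exact Submodule.sum_mem _ fun i _ => isHomPoly_polySMul (hp i) _

theorem pdu_pdx_comm (hf : DiffHomFamily k f) (i j : Fin m) :
    pdu i (pdx j f) = pdx j (pdu i f) := by
  obtain ⟨_, p, c, -, hc, rfl⟩ := hf.exists_eq_sum_polySMul
  rw [pdx_sum_polySMul p hc, pdu_sum_polySMul, pdu_sum_polySMul, pdx_sum_polySMul _ hc]

theorem pdx_mem_harmonicPoly (hf : DiffHomFamily k f) (harm : ∀ x, lap (f x) = 0) (j : Fin m)
    (x : Fin m → ℝ) : pdx j f x ∈ harmonicPoly m k E := by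
  refine ⟨hf.isHomPoly_pdx j x, ?_⟩
  ext u
  have hcomm (i : Fin m) : pdu i (pdu i (pdx j f)) = pdx j (pdu i (pdu i f)) := by
    rw [hf.pdu_pdx_comm, (hf.pdu i).pdu_pdx_comm]
  have lap_eq : ∑ i, (fun y => pdu i (pdu i f) y u) = 0 := by
    ext y
    rw [Finset.sum_apply]
    exact congrFun (harm y) u
  calc
    lap (pdx j f x) u = ∑ i, pdu i (pdu i (pdx j f)) x u := rfl
    _ = ∑ i, pd j (fun y => pdu i (pdu i f) y u) x := by simp only [hcomm, pdx, pd]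
    _ = pd j (∑ i, fun y => pdu i (pdu i f) y u) x :=
      (pd_sum (fun i => ((hf.pdu i).pdu i).differentiable u x) j).symm
    _ = 0 := by rw [lap_eq, pd_zero, Pi.zero_apply]

end DiffHomFamily

end Families

section RaritaSchwinger

variable {m k : ℕ} {Cl : Type*} [NormedRing Cl] [NormedAlgebra ℝ Cl] {e : Fin m → Cl}
  {f : (Fin m → ℝ) → (Fin m → ℝ) → Cl}

theorem diracx_mem_harmonicPoly (hf : ∀ u, Differentiable ℝ fun x => f x u)
    (harm : ∀ x, f x ∈ harmonicPoly m k Cl) (x : Fin m → ℝ) :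
    diracx e f x ∈ harmonicPoly m k Cl := by
  have hsum : diracx e f x = ∑ j, fun u => e j * pdx j f x u := by
    ext u
    simp [diracx]
  rw [hsum]
  exact Submodule.sum_mem _ fun j _ => const_mul_mem_harmonicPoly (e j)
    (DiffHomFamily.pdx_mem_harmonicPoly ⟨fun y => (harm y).1, hf⟩ (fun y => (harm y).2) j x)

theorem PpU_apply_eq (e : Fin m → Cl) (k : ℕ) (f : (Fin m → ℝ) → (Fin m → ℝ) → Cl)
    (x : Fin m → ℝ) :
    PpU e (k + 1) f x = f x + ((m : ℝ) + 2 * k)⁻¹ • (emb e * dirac e (f x)) := by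
  have hconst : (m : ℝ) + 2 * (k + 1 : ℕ) - 2 = m + 2 * k := by
    push_cast
    ring
  rw [← hconst]
  rfl

theorem PmU_apply_eq (e : Fin m → Cl) (k : ℕ) (f : (Fin m → ℝ) → (Fin m → ℝ) → Cl)
    (x : Fin m → ℝ) : PmU e k f x = f x - PpU e k f x := by
  ext u
  simp [PmU, PpU]

theorem PpU_mem_monogenicPoly (hrel : CliffordRel e) (hmk : (m : ℝ) + 2 * k ≠ 0)
    {x : Fin m → ℝ} (hx : f x ∈ harmonicPoly m (k + 1) Cl) :
    PpU e (k + 1) f x ∈ monogenicPoly e (k + 1) := by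
  have hD : dirac e (f x) ∈ monogenicPoly e k := dirac_mem_monogenicPoly hrel hx
  have huD := hD.1.emb_mul e
  rw [PpU_apply_eq]
  refine ⟨Submodule.add_mem _ hx.1 (Submodule.smul_mem _ _ huD), ?_⟩
  rw [dirac_add e hx.1.differentiable (huD.differentiable.const_smul _),
    dirac_const_smul e _ huD.differentiable, dirac_emb_mul_of_mem_monogenicPoly hrel hD,
    smul_smul, mul_neg, inv_mul_cancel₀ hmk, neg_one_smul, add_neg_cancel]

theorem PmU_mem_harmonicPoly (hrel : CliffordRel e) (hmk : (m : ℝ) + 2 * k ≠ 0)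
    {x : Fin m → ℝ} (hx : f x ∈ harmonicPoly m (k + 1) Cl) :
    PmU e (k + 1) f x ∈ harmonicPoly m (k + 1) Cl := by
  rw [PmU_apply_eq]
  exact Submodule.sub_mem _ hx
    (monogenicPoly_le_harmonicPoly hrel (PpU_mem_monogenicPoly hrel hmk hx))

theorem exists_PmU_eq_emb_mul (hrel : CliffordRel e) {x : Fin m → ℝ}
    (hx : f x ∈ harmonicPoly m (k + 1) Cl) :
    ∃ q ∈ monogenicPoly e k, PmU e (k + 1) f x = emb e * q := by
  refine ⟨-((m : ℝ) + 2 * k)⁻¹ • dirac e (f x),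
    Submodule.smul_mem _ _ (dirac_mem_monogenicPoly hrel hx), ?_⟩
  ext u
  simp [PmU_apply_eq, PpU_apply_eq]

theorem PmU_eq_zero_of_mem_monogenicPoly {x : Fin m → ℝ} (hx : f x ∈ monogenicPoly e k) :
    PmU e k f x = 0 := by
  ext u
  have h : diracu e f x u = 0 := congrFun hx.2 u
  simp [PmU, h]

theorem PpU_eq_zero_of_eq_emb_mul (hrel : CliffordRel e) (hmk : (m : ℝ) + 2 * k ≠ 0)
    {x : Fin m → ℝ} {q : (Fin m → ℝ) → Cl} (hq : q ∈ monogenicPoly e k)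
    (hx : f x = emb e * q) : PpU e (k + 1) f x = 0 := by
  rw [PpU_apply_eq, hx, dirac_emb_mul_of_mem_monogenicPoly hrel hq]
  ext u
  simp only [Pi.add_apply, Pi.mul_apply, Pi.zero_apply, neg_smul, Pi.neg_apply,
    mul_neg, smul_neg, mul_smul_comm, inv_smul_smul₀ hmk, add_neg_cancel]

theorem PpU_PmU_eq_zero (hrel : CliffordRel e) (hmk : (m : ℝ) + 2 * k ≠ 0)
    {x : Fin m → ℝ} (hx : f x ∈ harmonicPoly m (k + 1) Cl) :
    PpU e (k + 1) (PmU e (k + 1) f) x = 0 :=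
  have ⟨_, hq, hPm⟩ := exists_PmU_eq_emb_mul hrel hx
  PpU_eq_zero_of_eq_emb_mul hrel hmk hq hPm

theorem PmU_PpU_eq_zero (hrel : CliffordRel e) (hmk : (m : ℝ) + 2 * k ≠ 0)
    {x : Fin m → ℝ} (hx : f x ∈ harmonicPoly m (k + 1) Cl) :
    PmU e (k + 1) (PpU e (k + 1) f) x = 0 :=
  PmU_eq_zero_of_mem_monogenicPoly (PpU_mem_monogenicPoly hrel hmk hx)

theorem DiffHomFamily.differentiable_PpU (hf : DiffHomFamily k f) (e : Fin m → Cl)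
    (u : Fin m → ℝ) : Differentiable ℝ fun x => PpU e k f x u := by
  have hpdu (j : Fin m) : Differentiable ℝ fun x => pdu j f x u := (hf.pdu j).differentiable u
  have hd := hf.differentiable u
  unfold PpU diracu
  fun_prop

theorem DiffHomFamily.differentiable_PmU (hf : DiffHomFamily k f) (e : Fin m → Cl)
    (u : Fin m → ℝ) : Differentiable ℝ fun x => PmU e k f x u := by
  simp only [PmU_apply_eq]
  exact (hf.differentiable u).sub (hf.differentiable_PpU e u)

end RaritaSchwinger

theorem stmt11_general {m k : ℕ} (hm : 1 ≤ m) (hk : 1 ≤ k) {Cl : Type*} [NormedRing Cl]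
    [NormedAlgebra ℝ Cl] (e : Fin m → Cl) (hrel : CliffordRel e)
    (f : (Fin m → ℝ) → (Fin m → ℝ) → Cl)
    (hf : ∀ u, Differentiable ℝ fun x => f x u)
    (hfu : ∀ x, IsHomPoly k (f x) ∧ lap (f x) = 0) :
    ((∀ x u, PpU e k (PmDx e k (PpU e k f)) x u = 0) ∧
      (∀ x u, PpU e k (PmDx e k (PmU e k f)) x u = 0) ∧
      (∀ x u, PmU e k (PpDx e k (PpU e k f)) x u = 0) ∧
      (∀ x u, PmU e k (PpDx e k (PmU e k f)) x u = 0)) ∧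
    (∀ x, (IsHomPoly k (PpDx e k (PpU e k f) x) ∧ dirac e (PpDx e k (PpU e k f) x) = 0) ∧
      (IsHomPoly k (PpDx e k (PmU e k f) x) ∧ dirac e (PpDx e k (PmU e k f) x) = 0) ∧
      (∃ q : (Fin m → ℝ) → Cl, IsHomPoly (k - 1) q ∧ dirac e q = 0 ∧
        PmDx e k (PpU e k f) x = fun u => emb e u * q u) ∧
      (∃ q : (Fin m → ℝ) → Cl, IsHomPoly (k - 1) q ∧ dirac e q = 0 ∧
        PmDx e k (PmU e k f) x = fun u => emb e u * q u)) := by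
  obtain ⟨n, rfl⟩ := Nat.exists_eq_add_of_le' hk
  have hmn : (m : ℝ) + 2 * n ≠ 0 := by positivity
  have hfam : DiffHomFamily (n + 1) f := ⟨fun x => (hfu x).1, hf⟩
  have hPp (x : Fin m → ℝ) : diracx e (PpU e (n + 1) f) x ∈ harmonicPoly m (n + 1) Cl :=
    diracx_mem_harmonicPoly (hfam.differentiable_PpU e)
      (fun y => monogenicPoly_le_harmonicPoly hrel (PpU_mem_monogenicPoly hrel hmn (hfu y))) x
  have hPm (x : Fin m → ℝ) : diracx e (PmU e (n + 1) f) x ∈ harmonicPoly m (n + 1) Cl :=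
    diracx_mem_harmonicPoly (hfam.differentiable_PmU e)
      (fun y => PmU_mem_harmonicPoly hrel hmn (hfu y)) x
  have exists_emb_mul {g : (Fin m → ℝ) → (Fin m → ℝ) → Cl} {x : Fin m → ℝ}
      (hg : g x ∈ harmonicPoly m (n + 1) Cl) :
      ∃ q, IsHomPoly n q ∧ dirac e q = 0 ∧ PmU e (n + 1) g x = fun u => emb e u * q u :=
    have ⟨q, hq, hqx⟩ := exists_PmU_eq_emb_mul hrel hg
    ⟨q, hq.1, hq.2, hqx⟩
  exact ⟨⟨fun x => congrFun (PpU_PmU_eq_zero hrel hmn (hPp x)),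
      fun x => congrFun (PpU_PmU_eq_zero hrel hmn (hPm x)),
      fun x => congrFun (PmU_PpU_eq_zero hrel hmn (hPp x)),
      fun x => congrFun (PmU_PpU_eq_zero hrel hmn (hPm x))⟩,
    fun x => ⟨PpU_mem_monogenicPoly hrel hmn (hPp x), PpU_mem_monogenicPoly hrel hmn (hPm x),
      exists_emb_mul (hPp x), exists_emb_mul (hPm x)⟩⟩

/-- For `m ≥ 3`, `k ≥ 1` and smooth `f : ℝ^m × ℝ^m → Cl_m` with
`f(x,·) ∈ H_k` for each `x`, the compositions `P_k^+ ∘ T_k^* ∘ P_k^+`, `P_k^+ ∘ Q_k ∘ P_k^-`,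
`P_k^- ∘ R_k ∘ P_k^+` and `P_k^- ∘ T_k ∘ P_k^-` all annihilate `f`; equivalently, for each
fixed `x`, `(R_k P_k^+ f)(x,·)` and `(T_k P_k^- f)(x,·)` belong to `M_k`, while
`(T_k^* P_k^+ f)(x,·)` and `(Q_k P_k^- f)(x,·)` belong to `u M_{k-1}`. -/
theorem stmt11 {m k : ℕ} (hm : 3 ≤ m) (hk : 1 ≤ k) {Cl : Type*} [NormedRing Cl]
    [NormedAlgebra ℝ Cl] (e : Fin m → Cl) (hrel : CliffordRel e)
    (f : (Fin m → ℝ) → (Fin m → ℝ) → Cl)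
    (hf : ContDiff ℝ (⊤ : ℕ∞) (fun p : (Fin m → ℝ) × (Fin m → ℝ) => f p.1 p.2))
    (hfu : ∀ x, IsHomPoly k (f x) ∧ lap (f x) = 0) :
    ((∀ x u, PpU e k (PmDx e k (PpU e k f)) x u = 0) ∧
      (∀ x u, PpU e k (PmDx e k (PmU e k f)) x u = 0) ∧
      (∀ x u, PmU e k (PpDx e k (PpU e k f)) x u = 0) ∧
      (∀ x u, PmU e k (PpDx e k (PmU e k f)) x u = 0)) ∧
    (∀ x, (IsHomPoly k (PpDx e k (PpU e k f) x) ∧ dirac e (PpDx e k (PpU e k f) x) = 0) ∧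
      (IsHomPoly k (PpDx e k (PmU e k f) x) ∧ dirac e (PpDx e k (PmU e k f) x) = 0) ∧
      (∃ q : (Fin m → ℝ) → Cl, IsHomPoly (k - 1) q ∧ dirac e q = 0 ∧
        PmDx e k (PpU e k f) x = fun u => emb e u * q u) ∧
      (∃ q : (Fin m → ℝ) → Cl, IsHomPoly (k - 1) q ∧ dirac e q = 0 ∧
        PmDx e k (PmU e k f) x = fun u => emb e u * q u)) := by
  have hfx (u : Fin m → ℝ) : Differentiable ℝ fun x => f x u :=
    (hf.comp (contDiff_id.prodMk contDiff_const)).differentiable (by simp)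
  exact stmt11_general (by lia) hk e hrel f hfx hfu
end
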